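/- Let 0<α<1. Then there exists a constant c_α, depending only on α (and on sup_n m_n), such that for every martingale f ∈ H_{1/(1+α)}(G_m) and every n ≥ 2, (1/log n) Σ_{k=1}^{n} ‖σ_k^α f‖_{1/(1+α)}^{1/(1+α)} / k ≤ c_α ‖f‖_{H_{1/(1+α)}}^{1/(1+α)}, where σ_k^α denotes the k-th (C,α) Cesàro mean of the Vilenkin-Fourier series. -/

import Mathlib

open MeasureTheory Filter Finset Asymptotics
open scoped ENNReal NNReal

noncomputable section

namespace Vilenkin

/-- The Vilenkin group `G_m`: the complete direct product of the cyclic groups `Z_{m_n}`. -/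
abbrev G (m : ℕ → ℕ) := ∀ n, ZMod (m n)

/-- The generalized number system `M_0 = 1`, `M_{n+1} = m_n M_n`. -/
def MM (m : ℕ → ℕ) : ℕ → ℕ
  | 0 => 1
  | n + 1 => m n * MM m n

/-- The generalized Rademacher functions `r_k(x) = exp(2 π i x_k / m_k)`. -/
def rade (m : ℕ → ℕ) (k : ℕ) (x : G m) : ℂ :=
  Complex.exp (2 * Real.pi * Complex.I * ((x k).val : ℂ) / (m k : ℂ))

/-- The Vilenkin system `ψ_n = ∏_k r_k^{n_k}`, where `n = ∑_k n_k M_k` is the expansion of `n`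
in the generalized number system (the digits `n_k = (n / M_k) mod m_k` vanish for `k > n`). -/
def psi (m : ℕ → ℕ) (n : ℕ) (x : G m) : ℂ :=
  ∏ k ∈ Finset.range (n + 1), rade m k x ^ (n / MM m k % m k)

/-- The Dirichlet kernels `D_n = ∑_{k=0}^{n-1} ψ_k`. -/
def D (m : ℕ → ℕ) (n : ℕ) (x : G m) : ℂ := ∑ k ∈ Finset.range n, psi m k x

/-- The Fejér kernels `K_n = (1/n) ∑_{k=1}^{n} D_k`. -/
def K (m : ℕ → ℕ) (n : ℕ) (x : G m) : ℂ := (n : ℂ)⁻¹ * ∑ k ∈ Finset.Icc 1 n, D m k x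

/-- `Q_n = ∑_{k=0}^{n-1} q_k`. -/
def Q (q : ℕ → ℝ) (n : ℕ) : ℝ := ∑ k ∈ Finset.range n, q k

/-- The Nörlund kernels `F_n = (1/Q_n) ∑_{k=1}^{n} q_{n-k} D_k`. -/
def F (m : ℕ → ℕ) (q : ℕ → ℝ) (n : ℕ) (x : G m) : ℂ :=
  ((Q q n : ℝ) : ℂ)⁻¹ * ∑ k ∈ Finset.Icc 1 n, (q (n - k) : ℂ) * D m k x

/-- The interval (cylinder) `I_n(x) = {y : y_j = x_j for all j < n}`. -/
def cyl (m : ℕ → ℕ) (n : ℕ) (x : G m) : Set (G m) := {y | ∀ j < n, y j = x j}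

/-- The element `s_k e_k` of `G_m` (value `s_k` in coordinate `k`, zero elsewhere). -/
def oneSpike (m : ℕ → ℕ) (k sk : ℕ) : G m := fun j => if j = k then (sk : ZMod (m j)) else 0

/-- The element `s_k e_k + s_l e_l` of `G_m` (for `k ≠ l`). -/
def twoSpike (m : ℕ → ℕ) (k sk l sl : ℕ) : G m :=
  fun j => if j = k then (sk : ZMod (m j)) else if j = l then (sl : ZMod (m j)) else 0

/-- The σ-algebra `𝔉_n` generated by the intervals `I_n(x)`, i.e. by the first `n`
coordinates. -/
def filt (m : ℕ → ℕ) (n : ℕ) : MeasurableSpace (G m) :=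
  MeasurableSpace.comap (fun x (i : Fin n) => x i.val) inferInstance

/-- `f = (f^{(n)})` is a martingale with respect to the filtration `(𝔉_n)` and the measure `μ`. -/
def IsMartingale (m : ℕ → ℕ) (μ : Measure (G m)) (f : ℕ → G m → ℂ) : Prop :=
  (∀ n, Integrable (f n) μ) ∧ (∀ n, Measurable[filt m n] (f n)) ∧
    ∀ n, ∀ s : Set (G m), MeasurableSet[filt m n] s →
      ∫ x in s, f (n + 1) x ∂μ = ∫ x in s, f n x ∂μ

/-- The `L_p`-quasinorm `(∫ g^p dμ)^{1/p}` of a nonnegative (extended-real-valued) function. -/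
def lpNormE (m : ℕ → ℕ) (μ : Measure (G m)) (p : ℝ) (g : G m → ℝ≥0∞) : ℝ≥0∞ :=
  (∫⁻ x, g x ^ p ∂μ) ^ (1 / p)

/-- The martingale Hardy space quasinorm `‖f‖_{H_p} = ‖sup_n |f^{(n)}|‖_p`. -/
def HpNorm (m : ℕ → ℕ) (μ : Measure (G m)) (p : ℝ) (f : ℕ → G m → ℂ) : ℝ≥0∞ :=
  lpNormE m μ p (fun x => ⨆ n, (‖f n x‖₊ : ℝ≥0∞))

/-- The Vilenkin-Fourier coefficients of a martingale:
`f̂(i) = lim_k ∫ f^{(k)} conj ψ_i dμ`. -/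
def mcoef (m : ℕ → ℕ) (μ : Measure (G m)) (f : ℕ → G m → ℂ) (i : ℕ) : ℂ :=
  limUnder atTop fun k => ∫ x, f k x * (starRingEnd ℂ) (psi m i x) ∂μ

/-- The partial sums `S_n f = ∑_{k=0}^{n-1} f̂(k) ψ_k` of the Vilenkin-Fourier series of a
martingale. -/
def mS (m : ℕ → ℕ) (μ : Measure (G m)) (f : ℕ → G m → ℂ) (n : ℕ) (x : G m) : ℂ :=
  ∑ k ∈ Finset.range n, mcoef m μ f k * psi m k x

/-- The Nörlund means `t_n f = (1/Q_n) ∑_{k=1}^{n} q_{n-k} S_k f` of a martingale. -/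
def mT (m : ℕ → ℕ) (q : ℕ → ℝ) (μ : Measure (G m)) (f : ℕ → G m → ℂ) (n : ℕ) (x : G m) : ℂ :=
  ((Q q n : ℝ) : ℂ)⁻¹ * ∑ k ∈ Finset.Icc 1 n, (q (n - k) : ℂ) * mS m μ f k x

/-- The Cesàro numbers `A_0^α = 0`, `A_n^α = (α+1)⋯(α+n)/n!`. -/
def AC (α : ℝ) (n : ℕ) : ℝ :=
  if n = 0 then 0 else (∏ j ∈ Finset.Icc 1 n, (α + (j : ℝ))) / (n.factorial : ℝ)

/-- The `(C,α)` (Cesàro) means `σ_n^α f = (1/A_n^α) ∑_{k=1}^{n} A_{n-k}^{α-1} S_k f` of a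
martingale. -/
def mCes (m : ℕ → ℕ) (α : ℝ) (μ : Measure (G m)) (f : ℕ → G m → ℂ) (n : ℕ) (x : G m) : ℂ :=
  ((AC α n : ℝ) : ℂ)⁻¹ * ∑ k ∈ Finset.Icc 1 n, ((AC (α - 1) (n - k) : ℝ) : ℂ) * mS m μ f k x

/-- The Fejér means `σ_n f = (1/n) ∑_{k=1}^{n} S_k f` of a martingale. -/
def mFej (m : ℕ → ℕ) (μ : Measure (G m)) (f : ℕ → G m → ℂ) (n : ℕ) (x : G m) : ℂ :=
  (n : ℂ)⁻¹ * ∑ k ∈ Finset.Icc 1 n, mS m μ f k x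

/-- The Vilenkin-Fourier coefficients of an integrable function. -/
def fcoef (m : ℕ → ℕ) (μ : Measure (G m)) (g : G m → ℂ) (i : ℕ) : ℂ :=
  ∫ x, g x * (starRingEnd ℂ) (psi m i x) ∂μ

/-- The partial sums of the Vilenkin-Fourier series of an integrable function. -/
def fS (m : ℕ → ℕ) (μ : Measure (G m)) (g : G m → ℂ) (n : ℕ) (x : G m) : ℂ :=
  ∑ k ∈ Finset.range n, fcoef m μ g k * psi m k x

/-- The Nörlund means of an integrable function. -/
def fT (m : ℕ → ℕ) (q : ℕ → ℝ) (μ : Measure (G m)) (g : G m → ℂ) (n : ℕ) (x : G m) : ℂ :=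
  ((Q q n : ℝ) : ℂ)⁻¹ * ∑ k ∈ Finset.Icc 1 n, (q (n - k) : ℂ) * fS m μ g k x

/-!
Up to a constant, the kernel of `σ_k^α` at `x - t` is at most `k^{-α}` times the sum over `s ≤ l`
of `M_l^α M_s`, restricted to those `t` that agree with `x` in the first `l` coordinates except
possibly the `s`-th. Take `p = 1 / (1 + α)` and `b` with `|b| ≤ r`, supported in an interval `I` of
level `N`. For `k ≥ M_N` this gives `‖σ_k^α b‖_p^p ≲ r^p μ(I) (1 + (N + 1) (M_N / k)^{1 - p})`,
each of the `N + 1` levels contributing equally because `p` is the critical exponent. If `b` has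
mean zero, then `σ_k^α b = 0` for `k < M_N`, so summing against `1 / k` up to `R` costs a multiple
of `log R + N + 1`, hence of `log R`.

To pass from atoms to a martingale `f`, descend the tree of intervals while keeping a truncation
height `r`. Whenever some child of the current interval exceeds `r`, double the height: the two
truncations differ by an atom of height `3r`, whose cost is paid for by the drop of
`∫ ((2 f*)^p - r^p)⁺` caused by the doubling. The total cost is therefore at most a multiple of
`∫ (f*)^p`.
-/

/-! ### The Vilenkin system and its Dirichlet kernels -/

section DirichletKernel

variable {m : ℕ → ℕ}

lemma MM_pos (hm : ∀ n, 2 ≤ m n) (n : ℕ) : 0 < MM m n := by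
  induction n with
  | zero => exact one_pos
  | succ n ih => exact Nat.mul_pos (two_pos.trans_le (hm n)) ih

lemma two_mul_MM_le_MM_succ (hm : ∀ n, 2 ≤ m n) (n : ℕ) : 2 * MM m n ≤ MM m (n + 1) :=
  Nat.mul_le_mul_right _ (hm n)

lemma monotone_MM (hm : ∀ n, 2 ≤ m n) : Monotone (MM m) :=
  monotone_nat_of_le_succ fun n => by have := two_mul_MM_le_MM_succ hm n; omega

lemma two_pow_mul_MM_le_MM_add (hm : ∀ n, 2 ≤ m n) (n k : ℕ) :
    2 ^ k * MM m n ≤ MM m (n + k) := by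
  induction k with
  | zero => simp
  | succ k ih =>
    have := two_mul_MM_le_MM_succ hm (n + k)
    rw [pow_succ, ← add_assoc]
    lia

lemma lt_MM (hm : ∀ n, 2 ≤ m n) (n : ℕ) : n < MM m n := by
  have := two_pow_mul_MM_le_MM_add hm 0 n
  simp only [MM, mul_one, zero_add] at this
  exact Nat.lt_two_pow_self.trans_le this

lemma MM_dvd_MM {k n : ℕ} (h : k ≤ n) : MM m k ∣ MM m n := by
  induction n, h using Nat.le_induction with
  | base => exact dvd_rfl
  | succ n _ ih => exact Dvd.dvd.mul_left ih _

lemma exists_MM_le_lt_MM_succ (hm : ∀ n, 2 ≤ m n) {n : ℕ} (hn : n ≠ 0) :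
    ∃ J, MM m J ≤ n ∧ n < MM m (J + 1) := by
  have hex : ∃ k, n < MM m k := ⟨n, lt_MM hm n⟩
  have hpos : Nat.find hex ≠ 0 := fun h => by
    have := Nat.find_spec hex
    rw [h, MM] at this
    omega
  obtain ⟨J, hJ⟩ := Nat.exists_eq_succ_of_ne_zero hpos
  exact ⟨J, not_lt.1 (Nat.find_min hex (by omega)), Nat.succ_eq_add_one J ▸ hJ ▸ Nat.find_spec hex⟩

lemma exists_mul_MM_eq_MM_mul (q : ℕ) {k t : ℕ} (hkt : k < t) :
    ∃ c, q * MM m t = MM m k * (m k * c) := by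
  obtain ⟨c, hc⟩ := MM_dvd_MM (m := m) (Nat.succ_le_of_lt hkt)
  exact ⟨q * c, by rw [hc, Nat.succ_eq_add_one, MM]; ring⟩

lemma digit_mul_MM_eq_zero (hm : ∀ n, 2 ≤ m n) (q : ℕ) {k t : ℕ} (hkt : k < t) :
    q * MM m t / MM m k % m k = 0 := by
  obtain ⟨c, hc⟩ := exists_mul_MM_eq_MM_mul (m := m) q hkt
  rw [hc, Nat.mul_div_cancel_left _ (MM_pos hm k), Nat.mul_mod_right]

lemma digit_mul_MM_add (hm : ∀ n, 2 ≤ m n) (q k : ℕ) {t r : ℕ} (hr : r < MM m t) :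
    (q * MM m t + r) / MM m k % m k = q * MM m t / MM m k % m k + r / MM m k % m k := by
  rcases lt_or_ge k t with hkt | htk
  · obtain ⟨c, hc⟩ := exists_mul_MM_eq_MM_mul (m := m) q hkt
    rw [digit_mul_MM_eq_zero hm q hkt, hc, Nat.mul_add_div (MM_pos hm k), Nat.mul_add_mod,
      zero_add]
  · obtain ⟨c, hc⟩ := MM_dvd_MM (m := m) htk
    have ht := MM_pos hm t
    rw [Nat.div_eq_of_lt (hr.trans_le (monotone_MM hm htk)), hc, ← Nat.div_div_eq_div_mul,
      ← Nat.div_div_eq_div_mul, Nat.mul_div_cancel _ ht, mul_comm q, Nat.mul_add_div ht,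
      Nat.div_eq_of_lt hr, Nat.zero_mod, add_zero, add_zero]

lemma psi_eq_prod_range (hm : ∀ n, 2 ≤ m n) {n R : ℕ} (h : n < MM m R) (x : G m) :
    psi m n x = ∏ k ∈ range R, rade m k x ^ (n / MM m k % m k) := by
  have extend : ∀ {R R' : ℕ}, n < MM m R → R ≤ R' →
      ∏ k ∈ range R, rade m k x ^ (n / MM m k % m k) =
        ∏ k ∈ range R', rade m k x ^ (n / MM m k % m k) := by
    intro R R' hR hRR'
    refine prod_subset (range_mono hRR') fun k _ hk => ?_
    rw [Nat.div_eq_of_lt (hR.trans_le (monotone_MM hm (by simpa using hk))), Nat.zero_mod,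
      pow_zero]
  have hn : n < MM m (n + 1) := (lt_MM hm n).trans_le (monotone_MM hm n.le_succ)
  rcases le_total (n + 1) R with hR | hR
  · exact extend hn hR
  · exact (extend h hR).symm

lemma psi_congr (hm : ∀ n, 2 ≤ m n) {n R : ℕ} (h : n < MM m R) {x y : G m}
    (hxy : ∀ j < R, x j = y j) : psi m n x = psi m n y := by
  rw [psi_eq_prod_range hm h, psi_eq_prod_range hm h]
  refine prod_congr rfl fun k hk => ?_
  rw [rade, rade, hxy k (mem_range.1 hk)]

lemma psi_mul_MM_add (hm : ∀ n, 2 ≤ m n) (q : ℕ) {t r : ℕ} (hr : r < MM m t) (x : G m) :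
    psi m (q * MM m t + r) x = psi m (q * MM m t) x * psi m r x := by
  have hR := lt_MM hm (q * MM m t + r)
  rw [psi_eq_prod_range hm hR, psi_eq_prod_range hm ((Nat.le_add_right _ _).trans_lt hR),
    psi_eq_prod_range hm ((Nat.le_add_left _ _).trans_lt hR), ← prod_mul_distrib]
  exact prod_congr rfl fun k _ => by rw [← pow_add, digit_mul_MM_add hm q k hr]

lemma psi_mul_MM (hm : ∀ n, 2 ≤ m n) {q t : ℕ} (hq : q < m t) (x : G m) :
    psi m (q * MM m t) x = rade m t x ^ q := by
  have hlt : q * MM m t < MM m (t + 1) := Nat.mul_lt_mul_of_pos_right hq (MM_pos hm t)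
  rw [psi_eq_prod_range hm hlt, prod_range_succ, Nat.mul_div_cancel _ (MM_pos hm t),
    Nat.mod_eq_of_lt hq, prod_eq_one, one_mul]
  exact fun k hk => by rw [digit_mul_MM_eq_zero hm q (mem_range.1 hk), pow_zero]

lemma neZero_of_two_le (hm : ∀ n, 2 ≤ m n) (k : ℕ) : NeZero (m k) :=
  ⟨(two_pos.trans_le (hm k)).ne'⟩

lemma rade_eq_toCircle (k : ℕ) [NeZero (m k)] (x : G m) :
    rade m k x = (ZMod.toCircle (x k) : ℂ) := by
  rw [ZMod.toCircle_apply, rade]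

lemma norm_rade (hm : ∀ n, 2 ≤ m n) (k : ℕ) (x : G m) : ‖rade m k x‖ = 1 := by
  have := neZero_of_two_le hm k
  rw [rade_eq_toCircle, Circle.norm_coe]

lemma norm_psi (hm : ∀ n, 2 ≤ m n) (n : ℕ) (x : G m) : ‖psi m n x‖ = 1 := by
  rw [psi, norm_prod]
  exact prod_eq_one fun k _ => by rw [norm_pow, norm_rade hm, one_pow]

lemma rade_sub (hm : ∀ n, 2 ≤ m n) (k : ℕ) (x t : G m) :
    rade m k (x - t) = rade m k x * starRingEnd ℂ (rade m k t) := by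
  have := neZero_of_two_le hm k
  rw [rade_eq_toCircle, rade_eq_toCircle, rade_eq_toCircle, Pi.sub_apply, AddChar.map_sub_eq_div,
    Circle.coe_div, div_eq_mul_inv, ← Circle.coe_inv_eq_conj, Circle.coe_inv]

lemma psi_sub (hm : ∀ n, 2 ≤ m n) (n : ℕ) (x t : G m) :
    psi m n (x - t) = psi m n x * starRingEnd ℂ (psi m n t) := by
  rw [psi, psi, psi, map_prod, ← prod_mul_distrib]
  exact prod_congr rfl fun k _ => by rw [rade_sub hm, mul_pow, map_pow]

lemma sum_rade_pow_eq_zero (hm : ∀ n, 2 ≤ m n) {k : ℕ} {x : G m} (hx : x k ≠ 0) :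
    ∑ q ∈ range (m k), rade m k x ^ q = 0 := by
  have := neZero_of_two_le hm k
  have rade_ne_one : rade m k x ≠ 1 := fun h => hx <| ZMod.injective_toCircle <| by
    rw [AddChar.map_zero_eq_one]
    exact Circle.ext (by rw [← rade_eq_toCircle, h, Circle.coe_one])
  have rade_pow : rade m k x ^ m k = 1 := by
    rw [rade_eq_toCircle, ← Circle.coe_pow, ← AddChar.map_nsmul_eq_pow, nsmul_eq_mul,
      CharP.cast_eq_zero, zero_mul, AddChar.map_zero_eq_one, Circle.coe_one]
  rw [geom_sum_eq rade_ne_one, rade_pow, sub_self, zero_div]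

lemma sum_psi_mul_MM_eq_zero (hm : ∀ n, 2 ≤ m n) {t : ℕ} {x : G m} (hx : x t ≠ 0) :
    ∑ q ∈ range (m t), psi m (q * MM m t) x = 0 := by
  rw [sum_congr rfl fun q hq => psi_mul_MM hm (mem_range.1 hq) x, sum_rade_pow_eq_zero hm hx]

lemma eq_sum_mul_of_block_recurrence {R : Type*} [Semiring R] {F c : ℕ → R} {M : ℕ}
    (h_zero : F 0 = 0) (h_block : ∀ q, F (q * M + M) = F (q * M) + c q * F M) (q : ℕ) :
    F (q * M) = (∑ i ∈ range q, c i) * F M := by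
  induction q with
  | zero => rw [zero_mul, h_zero, sum_range_zero, zero_mul]
  | succ q ih => rw [add_mul, one_mul, h_block, ih, sum_range_succ, add_mul]

lemma D_mul_MM_add (hm : ∀ n, 2 ≤ m n) (q : ℕ) {t r : ℕ} (hr : r ≤ MM m t) (x : G m) :
    D m (q * MM m t + r) x = D m (q * MM m t) x + psi m (q * MM m t) x * D m r x := by
  rw [D, sum_range_add, D, D, mul_sum]
  congr 1
  exact sum_congr rfl fun k hk => psi_mul_MM_add hm q ((mem_range.1 hk).trans_le hr) x

lemma D_mul_MM (hm : ∀ n, 2 ≤ m n) (q t : ℕ) (x : G m) :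
    D m (q * MM m t) x = (∑ i ∈ range q, psi m (i * MM m t) x) * D m (MM m t) x :=
  eq_sum_mul_of_block_recurrence (F := fun n => D m n x) (sum_range_zero _)
    (fun q => D_mul_MM_add hm q le_rfl x) q

lemma D_MM_eq_zero (hm : ∀ n, 2 ≤ m n) {s t : ℕ} (hs : s < t) {x : G m} (hx : x s ≠ 0) :
    D m (MM m t) x = 0 := by
  induction t, hs using Nat.le_induction with
  | base => rw [MM, D_mul_MM hm, sum_psi_mul_MM_eq_zero hm hx, zero_mul]
  | succ t _ ih => rw [MM, D_mul_MM hm, ih, mul_zero]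

lemma D_mul_MM_add_of_ne_zero (hm : ∀ n, 2 ≤ m n) (q : ℕ) {s t r : ℕ} (hr : r ≤ MM m t)
    (hs : s < t) {x : G m} (hx : x s ≠ 0) :
    D m (q * MM m t + r) x = psi m (q * MM m t) x * D m r x := by
  rw [D_mul_MM_add hm q hr, D_mul_MM hm, D_MM_eq_zero hm hs hx, mul_zero, zero_add]

lemma norm_D_le (hm : ∀ n, 2 ≤ m n) (n : ℕ) (x : G m) : ‖D m n x‖ ≤ n :=
  (norm_sum_le _ _).trans (by simp [norm_psi hm])

lemma norm_D_le_of_ne_zero (hm : ∀ n, 2 ≤ m n) (n : ℕ) {s : ℕ} {x : G m} (hx : x s ≠ 0) :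
    ‖D m n x‖ ≤ MM m (s + 1) := by
  have mod_lt := Nat.mod_lt n (MM_pos hm (s + 1))
  rw [← Nat.div_add_mod' n (MM m (s + 1)),
    D_mul_MM_add_of_ne_zero hm _ mod_lt.le s.lt_succ_self hx, norm_mul, norm_psi hm, one_mul]
  exact (norm_D_le hm _ x).trans (Nat.cast_le.2 mod_lt.le)

lemma sum_D_mul_MM_add (hm : ∀ n, 2 ≤ m n) (q : ℕ) {s t r : ℕ} (hr : r ≤ MM m t) (hs : s < t)
    {x : G m} (hx : x s ≠ 0) :
    ∑ i ∈ range (q * MM m t + r), D m i x =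
      ∑ i ∈ range (q * MM m t), D m i x + psi m (q * MM m t) x * ∑ i ∈ range r, D m i x := by
  rw [sum_range_add, mul_sum]
  congr 1
  exact sum_congr rfl fun k hk =>
    D_mul_MM_add_of_ne_zero hm q ((mem_range.1 hk).le.trans hr) hs hx

lemma sum_D_mul_MM (hm : ∀ n, 2 ≤ m n) (q : ℕ) {s t : ℕ} (hs : s < t) {x : G m} (hx : x s ≠ 0) :
    ∑ i ∈ range (q * MM m t), D m i x =
      (∑ i ∈ range q, psi m (i * MM m t) x) * ∑ i ∈ range (MM m t), D m i x :=
  eq_sum_mul_of_block_recurrence (F := fun n => ∑ i ∈ range n, D m i x) (sum_range_zero _)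
    (fun q => sum_D_mul_MM_add hm q le_rfl hs hx) q

lemma sum_D_MM_succ_eq_zero (hm : ∀ n, 2 ≤ m n) {s l : ℕ} (hs : s < l) {x : G m}
    (hxs : x s ≠ 0) (hxl : x l ≠ 0) : ∑ i ∈ range (MM m (l + 1)), D m i x = 0 := by
  rw [MM, sum_D_mul_MM hm _ hs hxs, sum_psi_mul_MM_eq_zero hm hxl, zero_mul]

lemma norm_sum_D_le_of_ne_zero (hm : ∀ n, 2 ≤ m n) {s l : ℕ} (hs : s < l) {x : G m}
    (hxs : x s ≠ 0) (hxl : x l ≠ 0) (n : ℕ) :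
    ‖∑ i ∈ range n, D m i x‖ ≤ (MM m (s + 1) : ℝ) * MM m (l + 1) := by
  have hsl : s < l + 1 := hs.trans l.lt_succ_self
  have mod_lt := Nat.mod_lt n (MM_pos hm (l + 1))
  rw [← Nat.div_add_mod' n (MM m (l + 1)), sum_D_mul_MM_add hm _ mod_lt.le hsl hxs,
    sum_D_mul_MM hm _ hsl hxs, sum_D_MM_succ_eq_zero hm hs hxs hxl, mul_zero, zero_add, norm_mul,
    norm_psi hm, one_mul]
  calc ‖∑ i ∈ range (n % MM m (l + 1)), D m i x‖
      ≤ ∑ _i ∈ range (n % MM m (l + 1)), (MM m (s + 1) : ℝ) :=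
        norm_sum_le_of_le _ fun i _ => norm_D_le_of_ne_zero hm i hxs
    _ = MM m (s + 1) * (n % MM m (l + 1) : ℕ) := by
        rw [sum_const, nsmul_eq_mul, card_range, mul_comm]
    _ ≤ MM m (s + 1) * MM m (l + 1) := by gcongr

end DirichletKernel

/-! ### Cesàro numbers -/

section CesaroNumbers

lemma AC_zero (γ : ℝ) : AC γ 0 = 0 := if_pos rfl

lemma AC_one (γ : ℝ) : AC γ 1 = γ + 1 := by simp [AC]

lemma AC_add_two (γ : ℝ) (n : ℕ) : AC γ (n + 2) = AC γ (n + 1) * (1 + γ / (n + 2)) := by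
  have : ((n + 1).factorial : ℝ) ≠ 0 := by positivity
  simp only [AC, Nat.succ_ne_zero, if_false]
  rw [prod_Icc_succ_top (by omega), Nat.factorial_succ (n + 1)]
  push_cast
  field_simp
  ring

variable {α : ℝ}

lemma rpow_add_one_le_mul_one_add_div (hα0 : 0 ≤ α) (hα1 : α ≤ 1) {x : ℝ} (hx : 0 < x) :
    (x + 1) ^ α ≤ x ^ α * (1 + α / x) := by
  have bernoulli : (1 + 1 / x) ^ α ≤ 1 + α * (1 / x) :=
    rpow_one_add_le_one_add_mul_self (by linarith [one_div_pos.2 hx]) hα0 hα1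
  calc (x + 1) ^ α = x ^ α * (1 + 1 / x) ^ α := by
        rw [← Real.mul_rpow hx.le (by positivity)]; congr 1; field_simp
    _ ≤ x ^ α * (1 + α / x) := by rw [← mul_one_div α x]; gcongr

lemma rpow_sub_one_mul_one_add_div_le (hα0 : 0 ≤ α) (hα1 : α ≤ 1) {x : ℝ} (hx : 1 ≤ x) :
    (x - 1) ^ α * (1 + α / x) ≤ x ^ α := by
  have hx0 : 0 < x := one_pos.trans_le hx
  have inv_le : 1 / x ≤ 1 := (div_le_one hx0).2 hx
  have bernoulli : (1 + -(1 / x)) ^ α ≤ 1 + α * -(1 / x) :=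
    rpow_one_add_le_one_add_mul_self (by linarith) hα0 hα1
  calc (x - 1) ^ α * (1 + α / x)
      = x ^ α * ((1 + -(1 / x)) ^ α * (1 + α / x)) := by
        rw [← mul_assoc, ← Real.mul_rpow hx0.le (by linarith)]; congr 2; field_simp; ring
    _ ≤ x ^ α * ((1 + α * -(1 / x)) * (1 + α / x)) := by gcongr
    _ = x ^ α * (1 - (α / x) ^ 2) := by ring
    _ ≤ x ^ α := mul_le_of_le_one_right (by positivity) (by linarith [sq_nonneg (α / x)])

lemma rpow_add_two_le_AC_succ (hα0 : 0 ≤ α) (hα1 : α ≤ 1) (n : ℕ) :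
    (n + 2 : ℝ) ^ α ≤ AC α (n + 1) := by
  induction n with
  | zero =>
    have := rpow_add_one_le_mul_one_add_div hα0 hα1 one_pos
    norm_num [AC_one, add_comm] at this ⊢
    exact this
  | succ n ih =>
    calc ((n + 1 : ℕ) + 2 : ℝ) ^ α = ((n + 2 : ℝ) + 1) ^ α := by push_cast; ring_nf
      _ ≤ (n + 2 : ℝ) ^ α * (1 + α / (n + 2)) :=
        rpow_add_one_le_mul_one_add_div hα0 hα1 (by positivity)
      _ ≤ AC α (n + 1) * (1 + α / (n + 2)) := by gcongr
      _ = AC α (n + 2) := (AC_add_two α n).symm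

lemma rpow_le_AC (hα0 : 0 < α) (hα1 : α ≤ 1) (n : ℕ) : (n : ℝ) ^ α ≤ AC α n := by
  rcases n with _ | n
  · rw [AC_zero, Nat.cast_zero, Real.zero_rpow hα0.ne']
  · refine le_trans ?_ (rpow_add_two_le_AC_succ hα0.le hα1 n)
    push_cast
    gcongr
    norm_num

lemma AC_le_two_mul_rpow (hα0 : 0 ≤ α) (hα1 : α ≤ 1) (n : ℕ) : AC α n ≤ 2 * (n : ℝ) ^ α := by
  rcases n with _ | n
  · rw [AC_zero]; positivity
  induction n with
  | zero => norm_num [AC_one]; linarith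
  | succ n ih =>
    have step := rpow_sub_one_mul_one_add_div_le hα0 hα1
      (show (1 : ℝ) ≤ n + 2 by linarith [n.cast_nonneg (α := ℝ)])
    calc AC α (n + 2) = AC α (n + 1) * (1 + α / (n + 2)) := AC_add_two α n
      _ ≤ 2 * ((n + 1 : ℕ) : ℝ) ^ α * (1 + α / (n + 2)) := by gcongr
      _ = 2 * ((n + 2 - 1 : ℝ) ^ α * (1 + α / (n + 2))) := by push_cast; ring_nf
      _ ≤ 2 * (n + 2 : ℝ) ^ α := by gcongr
      _ = 2 * ((n + 1 + 1 : ℕ) : ℝ) ^ α := by push_cast; ring_nf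

lemma AC_sub_one_mul_add (α : ℝ) (n : ℕ) : AC (α - 1) n * (α + n) = α * AC α n := by
  rcases n with _ | n
  · simp [AC_zero]
  induction n with
  | zero => norm_num [AC_one]
  | succ n ih =>
    rw [AC_add_two, AC_add_two]
    push_cast at ih ⊢
    rw [← mul_assoc, ← ih]
    field_simp
    ring

lemma AC_nonneg (hα0 : 0 ≤ α) (n : ℕ) : 0 ≤ AC α n := by
  unfold AC
  split_ifs <;> positivity

lemma AC_sub_one_eq (hα0 : 0 < α) (n : ℕ) : AC (α - 1) n = α * AC α n / (α + n) :=
  eq_div_of_mul_eq (by positivity) (AC_sub_one_mul_add α n)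

lemma AC_sub_one_nonneg (hα0 : 0 < α) (n : ℕ) : 0 ≤ AC (α - 1) n := by
  have := AC_nonneg hα0.le n
  rw [AC_sub_one_eq hα0]
  positivity

lemma mul_AC_sub_one_le (hα0 : 0 < α) (hα1 : α ≤ 1) (n : ℕ) : n * AC (α - 1) n ≤ AC α n := by
  have : α * AC α n ≤ AC α n := mul_le_of_le_one_left (AC_nonneg hα0.le n) hα1
  nlinarith [AC_sub_one_mul_add α n, AC_sub_one_nonneg hα0 n]

lemma AC_add_AC_sub_one_succ_le (hα0 : 0 < α) (n : ℕ) :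
    AC α n + AC (α - 1) (n + 1) ≤ AC α (n + 1) := by
  rcases n with _ | n
  · norm_num [AC_zero, AC_one]
  · rw [AC_sub_one_eq hα0, AC_add_two]
    push_cast
    refine le_of_eq ?_
    field_simp
    ring

lemma sum_AC_sub_one_le (hα0 : 0 < α) (n : ℕ) :
    ∑ k ∈ range n, AC (α - 1) (n - k) ≤ AC α n := by
  induction n with
  | zero => exact (AC_zero α).ge
  | succ n ih =>
    rw [sum_range_succ']
    simp only [Nat.add_sub_add_right, Nat.sub_zero]
    exact (add_le_add_left ih _).trans (AC_add_AC_sub_one_succ_le hα0 n)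

lemma antitoneOn_AC_sub_one (hα0 : 0 < α) (hα1 : α ≤ 1) :
    AntitoneOn (AC (α - 1)) (Set.Ici 1) := by
  refine antitoneOn_nat_Ici_of_succ_le fun n hn => ?_
  obtain ⟨n, rfl⟩ := Nat.exists_eq_add_of_le' hn
  rw [AC_add_two]
  have : (α - 1) / (n + 2) ≤ 0 := div_nonpos_of_nonpos_of_nonneg (by linarith) (by positivity)
  exact mul_le_of_le_one_right (AC_sub_one_nonneg hα0 _) (by linarith)

lemma monotone_AC (hα0 : 0 < α) : Monotone (AC α) :=
  monotone_nat_of_le_succ fun n =>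
    (le_add_of_nonneg_right (AC_sub_one_nonneg hα0 _)).trans (AC_add_AC_sub_one_succ_le hα0 n)

end CesaroNumbers

/-! ### Cesàro sums and the Cesàro kernel -/

section CesaroKernel

variable {E : Type*} [NormedAddCommGroup E] [NormedSpace ℝ E]

lemma norm_sum_smul_le_of_monotone {c : ℕ → ℝ} {d : ℕ → E} {A : ℝ} {K : ℕ} (hc0 : 0 ≤ c 0)
    (hc : ∀ k < K, c k ≤ c (k + 1)) (hA : ∀ k, ‖∑ i ∈ range k, d i‖ ≤ A) :
    ‖∑ k ∈ range (K + 1), c k • d k‖ ≤ 2 * A * c K := by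
  have hA0 : 0 ≤ A := (norm_nonneg _).trans (hA 0)
  have increments_nonneg : ∀ k ∈ range K, 0 ≤ c (k + 1) - c k :=
    fun k hk => sub_nonneg.2 (hc k (mem_range.1 hk))
  have hcK : 0 ≤ c K := by
    have := sum_nonneg increments_nonneg
    rw [sum_range_sub] at this
    linarith
  have norm_increments : ‖∑ k ∈ range K, (c (k + 1) - c k) • ∑ i ∈ range (k + 1), d i‖ ≤
      (c K - c 0) * A := by
    rw [← sum_range_sub, sum_mul]
    refine norm_sum_le_of_le _ fun k hk => ?_
    rw [norm_smul, Real.norm_of_nonneg (increments_nonneg k hk)]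
    exact mul_le_mul_of_nonneg_left (hA _) (increments_nonneg k hk)
  have norm_last : ‖c K • ∑ i ∈ range (K + 1), d i‖ ≤ c K * A := by
    rw [norm_smul, Real.norm_of_nonneg hcK]
    exact mul_le_mul_of_nonneg_left (hA _) hcK
  rw [sum_range_by_parts, Nat.add_sub_cancel]
  linarith [norm_sub_le_of_le norm_last norm_increments, mul_nonneg hc0 hA0]

variable {α : ℝ}

lemma norm_sum_AC_smul_le (hα0 : 0 < α) {n : ℕ} {d : ℕ → E} {A : ℝ} (hA : ∀ k < n, ‖d k‖ ≤ A) :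
    ‖∑ k ∈ range n, AC (α - 1) (n - k) • d k‖ ≤ AC α n * A := by
  rcases n.eq_zero_or_pos with rfl | hn
  · simp [AC_zero]
  calc ‖∑ k ∈ range n, AC (α - 1) (n - k) • d k‖
      ≤ ∑ k ∈ range n, AC (α - 1) (n - k) * A := by
        refine norm_sum_le_of_le _ fun k hk => ?_
        rw [norm_smul, Real.norm_of_nonneg (AC_sub_one_nonneg hα0 _)]
        exact mul_le_mul_of_nonneg_left (hA k (mem_range.1 hk)) (AC_sub_one_nonneg hα0 _)
    _ ≤ AC α n * A := by
        rw [← sum_mul]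
        exact mul_le_mul_of_nonneg_right (sum_AC_sub_one_le hα0 n)
          ((norm_nonneg _).trans (hA 0 hn))

/-- Abel summation away from the last `L` terms, where the weights are largest. -/
lemma norm_sum_AC_smul_le_of_partial_sums (hα0 : 0 < α) (hα1 : α ≤ 1) {d : ℕ → E} {A : ℝ} {L : ℕ}
    (hL : 1 ≤ L) (hd : ∀ k, ‖d k‖ ≤ A) (hsum : ∀ k, ‖∑ i ∈ range k, d i‖ ≤ A * L) (n : ℕ) :
    ‖∑ k ∈ range n, AC (α - 1) (n - k) • d k‖ ≤ 3 * AC α L * A := by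
  have hA0 : 0 ≤ A := (norm_nonneg _).trans (hd 0)
  rcases le_or_gt n L with hnL | hLn
  · have := mul_le_mul_of_nonneg_right (monotone_AC hα0 hnL) hA0
    linarith [norm_sum_AC_smul_le hα0 (n := n) fun k _ => hd k, mul_nonneg (AC_nonneg hα0.le L) hA0]
  obtain ⟨K, rfl⟩ : ∃ K, n = (K + 1) + L := ⟨n - L - 1, by omega⟩
  have head : ‖∑ k ∈ range (K + 1), AC (α - 1) (K + 1 + L - k) • d k‖ ≤
      2 * (A * L) * AC (α - 1) (K + 1 + L - K) :=
    norm_sum_smul_le_of_monotone (AC_sub_one_nonneg hα0 _)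
      (fun k hk => antitoneOn_AC_sub_one hα0 hα1 (Set.mem_Ici.2 (by omega))
        (Set.mem_Ici.2 (by omega)) (by omega)) hsum
  have last_weight : L * AC (α - 1) (K + 1 + L - K) ≤ AC α L := by
    refine le_trans ?_ (mul_AC_sub_one_le hα0 hα1 L)
    exact mul_le_mul_of_nonneg_left (antitoneOn_AC_sub_one hα0 hα1 hL (Set.mem_Ici.2 (by omega))
      (by omega)) L.cast_nonneg
  have tail := norm_sum_AC_smul_le hα0 (n := L) fun k _ => hd (K + 1 + k)
  rw [sum_range_add]
  simp only [Nat.add_sub_add_left]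
  linarith [norm_add_le_of_le head tail, mul_le_mul_of_nonneg_left last_weight hA0]

/-- The kernel of the Cesàro means: `σ_n^α f` is the convolution of `f` with
`(1/A_n^α) ∑_{k=1}^n A_{n-k}^{α-1} D_k`. As `A_0^{α-1} = 0` by convention and `D_0 = 0`, the sum is
taken over `k < n`. -/
def cesaroKernel (m : ℕ → ℕ) (α : ℝ) (n : ℕ) (y : G m) : ℂ :=
  (AC α n)⁻¹ • ∑ k ∈ range n, AC (α - 1) (n - k) • D m k y

variable {m : ℕ → ℕ}

lemma norm_cesaroKernel (hα0 : 0 < α) (n : ℕ) (y : G m) :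
    ‖cesaroKernel m α n y‖ = (AC α n)⁻¹ * ‖∑ k ∈ range n, AC (α - 1) (n - k) • D m k y‖ := by
  rw [cesaroKernel, norm_smul, Real.norm_of_nonneg (inv_nonneg.2 (AC_nonneg hα0.le n))]

lemma norm_cesaroKernel_le (hα0 : 0 < α) {n : ℕ} (hn : 1 ≤ n) {y : G m} {A : ℝ}
    (hA : ∀ k < n, ‖D m k y‖ ≤ A) : ‖cesaroKernel m α n y‖ ≤ A := by
  rw [norm_cesaroKernel hα0]
  exact inv_mul_le_of_le_mul₀ (AC_nonneg hα0.le n) ((norm_nonneg _).trans (hA 0 hn))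
    (norm_sum_AC_smul_le hα0 hA)

lemma norm_cesaroKernel_le_of_ne_zero (hα0 : 0 < α) (hα1 : α ≤ 1) (hm : ∀ n, 2 ≤ m n) {n : ℕ}
    (hn : 1 ≤ n) {s l : ℕ} (hs : s < l) {y : G m} (hys : y s ≠ 0) (hyl : y l ≠ 0) :
    ‖cesaroKernel m α n y‖ ≤ 6 * (n : ℝ) ^ (-α) * (MM m (s + 1) * (MM m (l + 1) : ℝ) ^ α) := by
  have hn0 : (0 : ℝ) < n := Nat.cast_pos.2 hn
  have hsum := norm_sum_AC_smul_le_of_partial_sums hα0 hα1 (MM_pos hm (l + 1))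
    (fun k => norm_D_le_of_ne_zero hm k hys) (norm_sum_D_le_of_ne_zero hm hs hys hyl) n
  calc ‖cesaroKernel m α n y‖
      ≤ (AC α n)⁻¹ * (3 * AC α (MM m (l + 1)) * MM m (s + 1)) := by
        rw [norm_cesaroKernel hα0]
        exact mul_le_mul_of_nonneg_left hsum (inv_nonneg.2 (AC_nonneg hα0.le n))
    _ ≤ ((n : ℝ) ^ α)⁻¹ * (3 * (2 * (MM m (l + 1) : ℝ) ^ α) * MM m (s + 1)) := by
        have := AC_nonneg hα0.le (MM m (l + 1))
        gcongr
        · exact rpow_le_AC hα0 hα1 n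
        · exact AC_le_two_mul_rpow hα0.le hα1 _
    _ = 6 * (n : ℝ) ^ (-α) * (MM m (s + 1) * (MM m (l + 1) : ℝ) ^ α) := by
        rw [Real.rpow_neg hn0.le]; ring

end CesaroKernel

/-! ### Pointwise majorant of the Cesàro kernel -/

section GeometricSums

lemma sum_le_of_le_geometric {ρ A : ℝ} (hρ0 : 0 ≤ ρ) (hρ1 : ρ < 1) (hA : 0 ≤ A) {a : ℕ → ℝ}
    {n : ℕ} (ha : ∀ i < n, a i ≤ ρ ^ i * A) : ∑ i ∈ range n, a i ≤ (1 - ρ)⁻¹ * A :=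
  calc ∑ i ∈ range n, a i ≤ ∑ i ∈ range n, ρ ^ i * A :=
        sum_le_sum fun i hi => ha i (mem_range.1 hi)
    _ = (∑ i ∈ range n, ρ ^ i) * A := (sum_mul _ _ _).symm
    _ ≤ (1 - ρ)⁻¹ * A := by
        rw [← tsum_geometric_of_lt_one hρ0 hρ1]
        gcongr
        exact (summable_geometric_of_lt_one hρ0 hρ1).sum_le_tsum _ fun i _ => pow_nonneg hρ0 i

/-- The sum `∑ i, 2 ^ (-β i)`, which bounds sums of powers `M_l ^ (± β)` because `M_l` at least
doubles at every step. -/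
def geomConst (β : ℝ) : ℝ := (1 - (2 : ℝ) ^ (-β))⁻¹

lemma two_rpow_neg_lt_one {β : ℝ} (hβ : 0 < β) : (2 : ℝ) ^ (-β) < 1 :=
  Real.rpow_lt_one_of_one_lt_of_neg one_lt_two (neg_lt_zero.2 hβ)

lemma geomConst_pos {β : ℝ} (hβ : 0 < β) : 0 < geomConst β :=
  inv_pos.2 (sub_pos.2 (two_rpow_neg_lt_one hβ))

variable {m : ℕ → ℕ}

lemma MM_cast_pos (hm : ∀ n, 2 ≤ m n) (n : ℕ) : (0 : ℝ) < MM m n := Nat.cast_pos.2 (MM_pos hm n)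

lemma MM_add_rpow_neg_le (hm : ∀ n, 2 ≤ m n) {β : ℝ} (hβ : 0 ≤ β) (n k : ℕ) :
    (MM m (n + k) : ℝ) ^ (-β) ≤ ((2 : ℝ) ^ (-β)) ^ k * (MM m n : ℝ) ^ (-β) := by
  have doubling : (2 : ℝ) ^ k * MM m n ≤ MM m (n + k) :=
    mod_cast two_pow_mul_MM_le_MM_add hm n k
  have := MM_cast_pos hm n
  calc (MM m (n + k) : ℝ) ^ (-β) ≤ ((2 : ℝ) ^ k * MM m n) ^ (-β) :=
        Real.rpow_le_rpow_of_nonpos (by positivity) doubling (neg_nonpos.2 hβ)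
    _ = ((2 : ℝ) ^ (-β)) ^ k * (MM m n : ℝ) ^ (-β) := by
        rw [Real.mul_rpow (by positivity) (by positivity), Real.rpow_pow_comm zero_le_two]

lemma sum_MM_rpow_le (hm : ∀ n, 2 ≤ m n) {β : ℝ} (hβ : 0 < β) (J : ℕ) :
    ∑ l ∈ range (J + 1), (MM m l : ℝ) ^ β ≤ geomConst β * (MM m J : ℝ) ^ β := by
  rw [← sum_range_reflect]
  refine sum_le_of_le_geometric (by positivity) (two_rpow_neg_lt_one hβ) (by positivity)
    fun i hi => ?_
  have step := MM_add_rpow_neg_le hm hβ.le (J - i) i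
  have hpos := MM_cast_pos hm
  rw [Nat.sub_add_cancel (by omega), Real.rpow_neg (hpos _).le, Real.rpow_neg (hpos _).le,
    ← div_eq_mul_inv, inv_le_comm₀ (by have := hpos J; positivity)
      (by have := hpos (J - i); positivity), inv_div, div_le_iff₀ (by positivity)] at step
  rwa [Nat.add_sub_cancel, mul_comm]

lemma sum_Ico_MM_rpow_neg_le (hm : ∀ n, 2 ≤ m n) {β : ℝ} (hβ : 0 < β) (N K : ℕ) :
    ∑ l ∈ Ico N K, (MM m l : ℝ) ^ (-β) ≤ geomConst β * (MM m N : ℝ) ^ (-β) := by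
  rw [sum_Ico_eq_sum_range]
  exact sum_le_of_le_geometric (by positivity) (two_rpow_neg_lt_one hβ) (by positivity)
    fun i _ => MM_add_rpow_neg_le hm hβ.le N i

end GeometricSums

section Majorant

/-- The cylinder `I_l(x)` with its coordinate `s` freed: the points agreeing with `x` in the first
`l` coordinates, except perhaps at `s`. -/
def cylExcept (m : ℕ → ℕ) (s l : ℕ) (x : G m) : Set (G m) := {t | ∀ j < l, j ≠ s → t j = x j}

/-- `∑_{s ≤ l} M_s 1_{t ∈ cylExcept s l x}`, the part of the majorant of `K_n^α(x - t)` that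
accounts for a second nonzero coordinate of `x - t` at `l`. -/
def majorantLayer (m : ℕ → ℕ) (l : ℕ) (x t : G m) : ℝ :=
  ∑ s ∈ range (l + 1), MM m s * (cylExcept m s l x).indicator 1 t

/-- The majorant of `n ^ α * |K_n^α(x - t)|`, up to a constant, for `M_J ≤ n < M_{J+1}`. -/
def majorant (m : ℕ → ℕ) (α : ℝ) (J : ℕ) (x t : G m) : ℝ :=
  ∑ l ∈ range (J + 1), (MM m l : ℝ) ^ α * majorantLayer m l x t

variable {m : ℕ → ℕ} {α : ℝ} {B : ℕ}

lemma MM_mul_indicator_nonneg (s l : ℕ) (x t : G m) :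
    0 ≤ (MM m s : ℝ) * (cylExcept m s l x).indicator 1 t :=
  mul_nonneg (Nat.cast_nonneg _) (Set.indicator_nonneg (fun _ _ => zero_le_one) t)

lemma majorantLayer_nonneg (l : ℕ) (x t : G m) : 0 ≤ majorantLayer m l x t :=
  sum_nonneg fun s _ => MM_mul_indicator_nonneg s l x t

lemma majorant_nonneg (α : ℝ) (J : ℕ) (x t : G m) : 0 ≤ majorant m α J x t :=
  sum_nonneg fun l _ => mul_nonneg (by positivity) (majorantLayer_nonneg l x t)

lemma MM_rpow_mul_majorantLayer_le_majorant (α : ℝ) {l J : ℕ} (hlJ : l ≤ J) (x t : G m) :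
    (MM m l : ℝ) ^ α * majorantLayer m l x t ≤ majorant m α J x t :=
  single_le_sum (f := fun l => (MM m l : ℝ) ^ α * majorantLayer m l x t)
    (fun l _ => mul_nonneg (by positivity) (majorantLayer_nonneg l x t))
    (mem_range.2 (Nat.lt_succ_of_le hlJ))

lemma MM_mul_MM_rpow_le_majorant (α : ℝ) {s l J : ℕ} (hsl : s ≤ l) (hlJ : l ≤ J) {x t : G m}
    (ht : t ∈ cylExcept m s l x) : (MM m s : ℝ) * (MM m l : ℝ) ^ α ≤ majorant m α J x t := by
  refine le_trans ?_ (MM_rpow_mul_majorantLayer_le_majorant α hlJ x t)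
  have le_layer := single_le_sum (f := fun s => (MM m s : ℝ) * (cylExcept m s l x).indicator 1 t)
    (fun s _ => MM_mul_indicator_nonneg s l x t) (mem_range.2 (Nat.lt_succ_of_le hsl))
  simp only [Set.indicator_of_mem ht, Pi.one_apply, mul_one] at le_layer
  rw [mul_comm]
  exact mul_le_mul_of_nonneg_left le_layer (by positivity)

lemma coord_eq_zero_or_first_nonzero (y : G m) (J : ℕ) :
    (∀ j < J, y j = 0) ∨ ∃ s < J, y s ≠ 0 ∧ ∀ j < s, y j = 0 := by
  classical
  by_cases h : ∃ s < J, y s ≠ 0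
  · obtain ⟨hsJ, hys⟩ := Nat.find_spec h
    refine .inr ⟨_, hsJ, hys, fun j hj => ?_⟩
    by_contra hyj
    exact Nat.find_min h hj ⟨hj.trans hsJ, hyj⟩
  · exact .inl fun j hj => by_contra fun hyj => h ⟨j, hj, hyj⟩

lemma first_two_nonzero_coords (y : G m) (J : ℕ) :
    (∀ j < J, y j = 0) ∨ (∃ s < J, y s ≠ 0 ∧ ∀ j < J, j ≠ s → y j = 0) ∨
      ∃ s l, s < l ∧ l < J ∧ y s ≠ 0 ∧ y l ≠ 0 ∧ ∀ j < l, j ≠ s → y j = 0 := by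
  rcases coord_eq_zero_or_first_nonzero y J with hy | ⟨s, hsJ, hys, hs_min⟩
  · exact .inl hy
  rcases coord_eq_zero_or_first_nonzero (Function.update y s 0) J with hy | ⟨l, hlJ, hyl, hl_min⟩
  · exact .inr (.inl ⟨s, hsJ, hys, fun j hj hjs => by simpa [hjs] using hy j hj⟩)
  have hls : l ≠ s := fun h => hyl (by rw [h, Function.update_self])
  rw [Function.update_of_ne hls] at hyl
  have hsl : s < l := (lt_or_gt_of_ne hls).resolve_left fun h => hyl (hs_min l h)
  exact .inr (.inr ⟨s, l, hsl, hlJ, hys, hyl, fun j hj hjs => by simpa [hjs] using hl_min j hj⟩)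

lemma one_le_of_le (hm : ∀ n, 2 ≤ m n) (hB : ∀ n, m n ≤ B) : (1 : ℝ) ≤ B :=
  Nat.one_le_cast.2 (one_le_two.trans ((hm 0).trans (hB 0)))

lemma MM_succ_le (hB : ∀ n, m n ≤ B) (n : ℕ) : (MM m (n + 1) : ℝ) ≤ B * MM m n := by
  rw [MM]
  exact mod_cast Nat.mul_le_mul_right _ (hB n)

lemma MM_succ_rpow_le (hα0 : 0 ≤ α) (hα1 : α ≤ 1) (hm : ∀ n, 2 ≤ m n) (hB : ∀ n, m n ≤ B) (n : ℕ) :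
    (MM m (n + 1) : ℝ) ^ α ≤ B * (MM m n : ℝ) ^ α :=
  calc (MM m (n + 1) : ℝ) ^ α ≤ (B * MM m n : ℝ) ^ α := by gcongr; exact MM_succ_le hB n
    _ = (B : ℝ) ^ α * (MM m n : ℝ) ^ α := Real.mul_rpow (by positivity) (by positivity)
    _ ≤ B * (MM m n : ℝ) ^ α := by
        gcongr
        exact Real.rpow_le_self_of_one_le (one_le_of_le hm hB) hα1

lemma exists_norm_cesaroKernel_le (hα0 : 0 < α) (hα1 : α ≤ 1) (hm : ∀ n, 2 ≤ m n)
    (hB : ∀ n, m n ≤ B) {n J : ℕ} (hn : 1 ≤ n) (hnJ : n < MM m (J + 1)) (y : G m) :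
    ∃ s l, s ≤ l ∧ l ≤ J ∧ (∀ j < l, j ≠ s → y j = 0) ∧
      ‖cesaroKernel m α n y‖ ≤ 6 * B ^ 2 * (n : ℝ) ^ (-α) * (MM m s * (MM m l : ℝ) ^ α) := by
  have hn0 : (0 : ℝ) < n := Nat.cast_pos.2 hn
  have hnJ' : (n : ℝ) ≤ MM m (J + 1) := Nat.cast_le.2 hnJ.le
  have bound_of_le (s : ℕ) (h : ‖cesaroKernel m α n y‖ ≤ MM m (s + 1)) :
      ‖cesaroKernel m α n y‖ ≤ 6 * B ^ 2 * (n : ℝ) ^ (-α) * (MM m s * (MM m J : ℝ) ^ α) := by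
    calc ‖cesaroKernel m α n y‖ ≤ (n : ℝ) ^ (-α) * (B * MM m s * (n : ℝ) ^ α) := by
          rw [Real.rpow_neg hn0.le, mul_comm, mul_assoc, mul_inv_cancel₀ (by positivity), mul_one]
          exact h.trans (MM_succ_le hB s)
      _ ≤ (n : ℝ) ^ (-α) * (B * MM m s * (B * (MM m J : ℝ) ^ α)) := by
          gcongr
          exact (Real.rpow_le_rpow hn0.le hnJ' hα0.le).trans (MM_succ_rpow_le hα0.le hα1 hm hB J)
      _ = 1 * B ^ 2 * (n : ℝ) ^ (-α) * (MM m s * (MM m J : ℝ) ^ α) := by ring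
      _ ≤ 6 * B ^ 2 * (n : ℝ) ^ (-α) * (MM m s * (MM m J : ℝ) ^ α) := by gcongr; norm_num
  rcases first_two_nonzero_coords y J with hy | ⟨s, hsJ, hys, hy⟩ | ⟨s, l, hsl, hlJ, hys, hyl, hy⟩
  · refine ⟨J, J, le_rfl, le_rfl, fun j hj _ => hy j hj, bound_of_le J ?_⟩
    exact norm_cesaroKernel_le hα0 hn fun k hk =>
      (norm_D_le hm k y).trans ((Nat.cast_le.2 hk.le).trans hnJ')
  · refine ⟨s, J, hsJ.le, le_rfl, hy, bound_of_le s ?_⟩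
    exact norm_cesaroKernel_le hα0 hn fun k _ => norm_D_le_of_ne_zero hm k hys
  · refine ⟨s, l, hsl.le, hlJ.le, hy, ?_⟩
    calc ‖cesaroKernel m α n y‖
        ≤ 6 * (n : ℝ) ^ (-α) * (MM m (s + 1) * (MM m (l + 1) : ℝ) ^ α) :=
          norm_cesaroKernel_le_of_ne_zero hα0 hα1 hm hn hsl hys hyl
      _ ≤ 6 * (n : ℝ) ^ (-α) * ((B * MM m s) * (B * (MM m l : ℝ) ^ α)) := by
          gcongr
          · exact MM_succ_le hB s
          · exact MM_succ_rpow_le hα0.le hα1 hm hB l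
      _ = 6 * B ^ 2 * (n : ℝ) ^ (-α) * (MM m s * (MM m l : ℝ) ^ α) := by ring

lemma norm_cesaroKernel_sub_le_majorant (hα0 : 0 < α) (hα1 : α ≤ 1) (hm : ∀ n, 2 ≤ m n)
    (hB : ∀ n, m n ≤ B) {n J : ℕ} (hn : 1 ≤ n) (hnJ : n < MM m (J + 1)) (x t : G m) :
    ‖cesaroKernel m α n (x - t)‖ ≤ 6 * B ^ 2 * (n : ℝ) ^ (-α) * majorant m α J x t := by
  obtain ⟨s, l, hsl, hlJ, hy, hle⟩ := exists_norm_cesaroKernel_le hα0 hα1 hm hB hn hnJ (x - t)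
  have ht : t ∈ cylExcept m s l x := fun j hj hjs => (sub_eq_zero.1 (hy j hj hjs)).symm
  exact hle.trans (mul_le_mul_of_nonneg_left (MM_mul_MM_rpow_le_majorant α hsl hlJ ht)
    (by positivity))

end Majorant

/-! ### Integrals of the majorant -/

section Cylinders

variable {m : ℕ → ℕ} {B : ℕ}

lemma measurableSet_coord_eq (j : ℕ) (a : ZMod (m j)) : MeasurableSet {t : G m | t j = a} :=
  (measurable_pi_apply j : Measurable fun t : G m => t j) (MeasurableSet.singleton a)

lemma measurableSet_cylExcept (s l : ℕ) (x : G m) : MeasurableSet (cylExcept m s l x) := by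
  simp only [cylExcept, Set.ofPred_forall]
  exact .iInter fun j => .iInter fun _ => .iInter fun _ => measurableSet_coord_eq j _

lemma measurableSet_cyl (l : ℕ) (x : G m) : MeasurableSet (cyl m l x) := by
  simp only [cyl, Set.ofPred_forall]
  exact .iInter fun j => .iInter fun _ => measurableSet_coord_eq j _

lemma cylExcept_subset_iUnion_cyl (s l : ℕ) (x : G m) :
    cylExcept m s l x ⊆ ⋃ a, cyl m l (Function.update x s a) := by
  refine fun t ht => Set.mem_iUnion.2 ⟨t s, fun j hj => ?_⟩
  rcases eq_or_ne j s with rfl | hjs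
  · rw [Function.update_self]
  · rw [Function.update_of_ne hjs, ht j hj hjs]

lemma mem_cylExcept_comm {s l N : ℕ} (hl : l ≤ N) {x₀ t : G m} (ht : t ∈ cyl m N x₀) (x : G m) :
    t ∈ cylExcept m s l x ↔ x ∈ cylExcept m s l x₀ :=
  forall₃_congr fun j hj _ => by rw [ht j (hj.trans_le hl), eq_comm]

lemma cylExcept_inter_cyl_eq_empty {s l N : ℕ} (hNl : N ≤ l) (hNs : N ≤ s) {x x₀ : G m}
    (hx : x ∉ cyl m N x₀) : cylExcept m s l x ∩ cyl m N x₀ = ∅ := by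
  refine Set.eq_empty_of_forall_notMem fun t ⟨hxt, ht⟩ => hx fun j hj => ?_
  rw [← ht j hj, hxt j (by omega) (by omega)]

variable {μ : Measure (G m)}

lemma real_cyl (hμ : ∀ n x, μ (cyl m n x) = (MM m n : ℝ≥0∞)⁻¹) (n : ℕ) (x : G m) :
    μ.real (cyl m n x) = (MM m n : ℝ)⁻¹ := by
  simp [Measure.real, hμ]

variable [IsProbabilityMeasure μ]

lemma real_cylExcept_le (hm : ∀ n, 2 ≤ m n) (hB : ∀ n, m n ≤ B)
    (hμ : ∀ n x, μ (cyl m n x) = (MM m n : ℝ≥0∞)⁻¹) (s l : ℕ) (x : G m) :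
    μ.real (cylExcept m s l x) ≤ B * (MM m l : ℝ)⁻¹ := by
  have := neZero_of_two_le hm s
  calc μ.real (cylExcept m s l x)
      ≤ μ.real (⋃ a, cyl m l (Function.update x s a)) :=
        measureReal_mono (cylExcept_subset_iUnion_cyl s l x)
    _ ≤ ∑ a, μ.real (cyl m l (Function.update x s a)) := measureReal_iUnion_fintype_le _
    _ = m s * (MM m l : ℝ)⁻¹ := by
        simp only [real_cyl hμ, sum_const, card_univ, ZMod.card, nsmul_eq_mul]
    _ ≤ B * (MM m l : ℝ)⁻¹ := by gcongr; exact hB s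

lemma real_cylExcept_inter_cyl_le (hμ : ∀ n x, μ (cyl m n x) = (MM m n : ℝ≥0∞)⁻¹) {s l N : ℕ}
    (hNl : N ≤ l) (hsN : s < N) (x x₀ : G m) :
    μ.real (cylExcept m s l x ∩ cyl m N x₀) ≤
      (MM m l : ℝ)⁻¹ * (cylExcept m s N x₀).indicator 1 x := by
  by_cases hx : x ∈ cylExcept m s N x₀
  · rw [Set.indicator_of_mem hx, Pi.one_apply, mul_one,
      ← real_cyl hμ l fun j => if j < N then x₀ j else x j]
    refine measureReal_mono fun t ⟨hxt, ht⟩ j hj => ?_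
    dsimp only
    split_ifs with hjN
    · exact ht j hjN
    · exact hxt j hj (by omega)
  · have : cylExcept m s l x ∩ cyl m N x₀ = ∅ := by
      refine Set.eq_empty_of_forall_notMem fun t ⟨hxt, ht⟩ => hx ?_
      exact (mem_cylExcept_comm le_rfl ht x).1 fun j hj => hxt j (hj.trans_le hNl)
    rw [this, measureReal_empty, Set.indicator_of_notMem hx, mul_zero]

end Cylinders

section MajorantIntegral

lemma rpow_sum_le_sum_rpow {ι : Type*} {p : ℝ} (hp0 : 0 < p) (hp1 : p ≤ 1) (S : Finset ι)
    {a : ι → ℝ} (ha : ∀ i ∈ S, 0 ≤ a i) : (∑ i ∈ S, a i) ^ p ≤ ∑ i ∈ S, a i ^ p :=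
  le_sum_of_subadditive_on_pred (· ^ p) (0 ≤ ·) (Real.zero_rpow hp0.ne').le
    (fun _ _ hx hy => Real.rpow_add_le_add_rpow hx hy hp0.le hp1) (fun _ _ => add_nonneg) a ha

variable {m : ℕ → ℕ} {α p : ℝ} {B : ℕ}

lemma majorantLayer_eq_of_mem_cyl {l N : ℕ} (hl : l ≤ N) {x₀ t : G m} (ht : t ∈ cyl m N x₀)
    (x : G m) : majorantLayer m l x t = majorantLayer m l x₀ x := by
  classical
  simp only [majorantLayer, Set.indicator_apply, mem_cylExcept_comm hl ht]
  rfl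

lemma majorantLayer_rpow_le (hp0 : 0 < p) (hp1 : p ≤ 1) (l : ℕ) (x t : G m) :
    majorantLayer m l x t ^ p ≤
      ∑ s ∈ range (l + 1), (MM m s : ℝ) ^ p * (cylExcept m s l x).indicator 1 t := by
  refine (rpow_sum_le_sum_rpow hp0 hp1 _ fun s _ => MM_mul_indicator_nonneg s l x t).trans_eq ?_
  refine sum_congr rfl fun s _ => ?_
  by_cases ht : t ∈ cylExcept m s l x
  · simp [Set.indicator_of_mem ht]
  · simp [Set.indicator_of_notMem ht, Real.zero_rpow hp0.ne']

lemma majorant_rpow_le (hp0 : 0 < p) (hp1 : p ≤ 1) (J : ℕ) (x t : G m) :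
    majorant m α J x t ^ p ≤
      ∑ l ∈ range (J + 1), (MM m l : ℝ) ^ (α * p) * majorantLayer m l x t ^ p := by
  refine (rpow_sum_le_sum_rpow hp0 hp1 _ fun l _ =>
    mul_nonneg (by positivity) (majorantLayer_nonneg l x t)).trans_eq (sum_congr rfl fun l _ => ?_)
  rw [Real.mul_rpow (by positivity) (majorantLayer_nonneg l x t), Real.rpow_mul (by positivity)]

section FiniteMeasure

variable {ν : Measure (G m)} [IsFiniteMeasure ν]

lemma integrable_indicator_cylExcept (s l : ℕ) (x : G m) :
    Integrable ((cylExcept m s l x).indicator (1 : G m → ℝ)) ν :=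
  (integrable_const 1).indicator (measurableSet_cylExcept s l x)

lemma integrable_sum_mul_indicator_cylExcept (c : ℕ → ℝ) (l : ℕ) (x : G m) :
    Integrable (fun t => ∑ s ∈ range (l + 1), c s * (cylExcept m s l x).indicator 1 t) ν :=
  integrable_finsetSum _ fun s _ => (integrable_indicator_cylExcept s l x).const_mul _

lemma integral_sum_mul_indicator_cylExcept (c : ℕ → ℝ) (l : ℕ) (x : G m) :
    ∫ t, ∑ s ∈ range (l + 1), c s * (cylExcept m s l x).indicator 1 t ∂ν =
      ∑ s ∈ range (l + 1), c s * ν.real (cylExcept m s l x) := by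
  rw [integral_finsetSum _ fun s _ => (integrable_indicator_cylExcept s l x).const_mul _]
  simp only [integral_const_mul, integral_indicator_one (measurableSet_cylExcept _ l x)]

lemma measurable_majorantLayer (l : ℕ) (x : G m) : Measurable (majorantLayer m l x) :=
  Finset.measurable_sum _ fun s _ =>
    (measurable_one.indicator (measurableSet_cylExcept s l x)).const_mul _

lemma integrable_majorantLayer_rpow (hp0 : 0 < p) (hp1 : p ≤ 1) (l : ℕ) (x : G m) :
    Integrable (fun t => majorantLayer m l x t ^ p) ν := by
  refine (integrable_sum_mul_indicator_cylExcept (fun s => (MM m s : ℝ) ^ p) l x).mono'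
    ((measurable_majorantLayer l x).pow_const p).aestronglyMeasurable (.of_forall fun t => ?_)
  rw [Real.norm_of_nonneg (Real.rpow_nonneg (majorantLayer_nonneg l x t) p)]
  exact majorantLayer_rpow_le hp0 hp1 l x t

lemma integrable_majorantLayer (l : ℕ) (x : G m) : Integrable (majorantLayer m l x) ν :=
  integrable_sum_mul_indicator_cylExcept (fun s => (MM m s : ℝ)) l x

lemma integrable_majorant (α : ℝ) (J : ℕ) (x : G m) : Integrable (majorant m α J x) ν :=
  integrable_finsetSum _ fun l _ => (integrable_majorantLayer l x).const_mul _

lemma integral_majorant (α : ℝ) (J : ℕ) (x : G m) :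
    ∫ t, majorant m α J x t ∂ν =
      ∑ l ∈ range (J + 1), (MM m l : ℝ) ^ α * ∫ t, majorantLayer m l x t ∂ν := by
  simp only [majorant]
  rw [integral_finsetSum _ fun l _ => (integrable_majorantLayer l x).const_mul _]
  simp only [integral_const_mul]

end FiniteMeasure

variable {μ : Measure (G m)}

lemma setIntegral_cyl_majorantLayer_eq (hμ : ∀ n x, μ (cyl m n x) = (MM m n : ℝ≥0∞)⁻¹)
    {l N : ℕ} (hl : l ≤ N) (x x₀ : G m) :
    ∫ t in cyl m N x₀, majorantLayer m l x t ∂μ = (MM m N : ℝ)⁻¹ * majorantLayer m l x₀ x := by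
  rw [setIntegral_congr_fun (measurableSet_cyl N x₀) fun t ht =>
    majorantLayer_eq_of_mem_cyl hl ht x, setIntegral_const, real_cyl hμ, smul_eq_mul]

variable [IsProbabilityMeasure μ]

lemma integral_majorantLayer_rpow_le (hp0 : 0 < p) (hp1 : p ≤ 1) (hm : ∀ n, 2 ≤ m n)
    (hB : ∀ n, m n ≤ B) (hμ : ∀ n x, μ (cyl m n x) = (MM m n : ℝ≥0∞)⁻¹) (l : ℕ) (x : G m) :
    ∫ t, majorantLayer m l x t ^ p ∂μ ≤ B * geomConst p * (MM m l : ℝ) ^ (p - 1) :=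
  calc ∫ t, majorantLayer m l x t ^ p ∂μ
      ≤ ∫ t, ∑ s ∈ range (l + 1), (MM m s : ℝ) ^ p * (cylExcept m s l x).indicator 1 t ∂μ :=
        integral_mono (integrable_majorantLayer_rpow hp0 hp1 l x)
          (integrable_sum_mul_indicator_cylExcept _ l x) (majorantLayer_rpow_le hp0 hp1 l x)
    _ = ∑ s ∈ range (l + 1), (MM m s : ℝ) ^ p * μ.real (cylExcept m s l x) :=
        integral_sum_mul_indicator_cylExcept _ l x
    _ ≤ ∑ s ∈ range (l + 1), (MM m s : ℝ) ^ p * (B * (MM m l : ℝ)⁻¹) := by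
        gcongr with s
        exact real_cylExcept_le hm hB hμ s l x
    _ ≤ geomConst p * (MM m l : ℝ) ^ p * (B * (MM m l : ℝ)⁻¹) := by
        rw [← sum_mul]
        gcongr
        exact sum_MM_rpow_le hm hp0 l
    _ = B * geomConst p * (MM m l : ℝ) ^ (p - 1) := by
        rw [Real.rpow_sub_one (MM_cast_pos hm l).ne']
        ring

lemma integral_majorant_le (hα : 0 < α) (hm : ∀ n, 2 ≤ m n) (hB : ∀ n, m n ≤ B)
    (hμ : ∀ n x, μ (cyl m n x) = (MM m n : ℝ≥0∞)⁻¹) (J : ℕ) (x : G m) :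
    ∫ t, majorant m α J x t ∂μ ≤ B * geomConst 1 * geomConst α * (MM m J : ℝ) ^ α := by
  have layer_le (l : ℕ) : ∫ t, majorantLayer m l x t ∂μ ≤ B * geomConst 1 := by
    simpa using integral_majorantLayer_rpow_le one_pos le_rfl hm hB hμ l x
  have := geomConst_pos one_pos
  calc ∫ t, majorant m α J x t ∂μ
      ≤ ∑ l ∈ range (J + 1), (MM m l : ℝ) ^ α * (B * geomConst 1) := by
        rw [integral_majorant]
        gcongr with l
        exact layer_le l
    _ ≤ geomConst α * (MM m J : ℝ) ^ α * (B * geomConst 1) := by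
        rw [← sum_mul]
        gcongr
        exact sum_MM_rpow_le hm hα J
    _ = B * geomConst 1 * geomConst α * (MM m J : ℝ) ^ α := by ring

-- At the critical exponent `p = 1 / (1 + α)` all `J + 1` layers contribute equally: this is the
-- source of the logarithm in the theorem.
lemma integral_majorant_rpow_le (hp0 : 0 < p) (hp1 : p ≤ 1) (hαp : α * p = 1 - p)
    (hm : ∀ n, 2 ≤ m n) (hB : ∀ n, m n ≤ B) (hμ : ∀ n x, μ (cyl m n x) = (MM m n : ℝ≥0∞)⁻¹)
    (J : ℕ) (x : G m) :
    Integrable (fun t => majorant m α J x t ^ p) μ ∧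
      ∫ t, majorant m α J x t ^ p ∂μ ≤ (J + 1) * (B * geomConst p) := by
  have layer_integrable (l : ℕ) :
      Integrable (fun t => (MM m l : ℝ) ^ (α * p) * majorantLayer m l x t ^ p) μ :=
    (integrable_majorantLayer_rpow hp0 hp1 l x).const_mul _
  have sum_integrable := integrable_finsetSum (range (J + 1)) fun l _ => layer_integrable l
  have integrable : Integrable (fun t => majorant m α J x t ^ p) μ := by
    refine sum_integrable.mono' ?_ (.of_forall fun t => ?_)
    · exact ((integrable_majorant α J x).1.aemeasurable.pow_const p).aestronglyMeasurable
    · rw [Real.norm_of_nonneg (Real.rpow_nonneg (majorant_nonneg α J x t) p)]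
      exact majorant_rpow_le hp0 hp1 J x t
  refine ⟨integrable, (integral_mono integrable sum_integrable
    (majorant_rpow_le hp0 hp1 J x)).trans ?_⟩
  rw [integral_finsetSum _ fun l _ => layer_integrable l]
  refine (sum_le_card_nsmul _ _ (B * geomConst p) fun l _ => ?_).trans_eq (by simp)
  have hl := MM_cast_pos hm l
  calc ∫ t, (MM m l : ℝ) ^ (α * p) * majorantLayer m l x t ^ p ∂μ
      ≤ (MM m l : ℝ) ^ (1 - p) * (B * geomConst p * (MM m l : ℝ) ^ (p - 1)) := by
        rw [integral_const_mul, hαp]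
        gcongr
        exact integral_majorantLayer_rpow_le hp0 hp1 hm hB hμ l x
    _ = B * geomConst p := by
        rw [mul_left_comm, ← Real.rpow_add hl, sub_add_sub_cancel', sub_self, Real.rpow_zero,
          mul_one]

lemma setIntegral_cyl_majorantLayer_le (hμ : ∀ n x, μ (cyl m n x) = (MM m n : ℝ≥0∞)⁻¹)
    {l N : ℕ} (hNl : N ≤ l) {x x₀ : G m} (hx : x ∉ cyl m N x₀) :
    ∫ t in cyl m N x₀, majorantLayer m l x t ∂μ ≤ (MM m l : ℝ)⁻¹ * majorantLayer m N x₀ x := by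
  have real_inter (s : ℕ) : (μ.restrict (cyl m N x₀)).real (cylExcept m s l x) =
      μ.real (cylExcept m s l x ∩ cyl m N x₀) :=
    measureReal_restrict_apply (measurableSet_cylExcept s l x)
  calc ∫ t in cyl m N x₀, majorantLayer m l x t ∂μ
      = ∑ s ∈ range (l + 1), MM m s * μ.real (cylExcept m s l x ∩ cyl m N x₀) := by
        simp only [majorantLayer, integral_sum_mul_indicator_cylExcept, real_inter]
    _ = ∑ s ∈ range N, MM m s * μ.real (cylExcept m s l x ∩ cyl m N x₀) := by
        refine (sum_subset (range_mono (by omega)) fun s _ hs => ?_).symm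
        rw [cylExcept_inter_cyl_eq_empty hNl (by simpa using hs) hx, measureReal_empty, mul_zero]
    _ ≤ ∑ s ∈ range N, MM m s * ((MM m l : ℝ)⁻¹ * (cylExcept m s N x₀).indicator 1 x) := by
        gcongr with s hs
        exact real_cylExcept_inter_cyl_le hμ hNl (mem_range.1 hs) x x₀
    _ = (MM m l : ℝ)⁻¹ * ∑ s ∈ range N, (MM m s : ℝ) * (cylExcept m s N x₀).indicator 1 x := by
        rw [mul_sum]
        exact sum_congr rfl fun s _ => mul_left_comm _ _ _
    _ ≤ (MM m l : ℝ)⁻¹ * majorantLayer m N x₀ x := by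
        refine mul_le_mul_of_nonneg_left ?_ (by positivity)
        exact sum_le_sum_of_subset_of_nonneg (range_mono N.le_succ)
          fun s _ _ => MM_mul_indicator_nonneg s N x₀ x

lemma sum_Ico_setIntegral_cyl_majorantLayer_le (hα1 : α < 1) (hm : ∀ n, 2 ≤ m n)
    (hμ : ∀ n x, μ (cyl m n x) = (MM m n : ℝ≥0∞)⁻¹) {N : ℕ} {x x₀ : G m} (hx : x ∉ cyl m N x₀)
    (J : ℕ) :
    ∑ l ∈ Ico N J, (MM m l : ℝ) ^ α * ∫ t in cyl m N x₀, majorantLayer m l x t ∂μ ≤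
      geomConst (1 - α) * ((MM m N : ℝ)⁻¹ * ((MM m N : ℝ) ^ α * majorantLayer m N x₀ x)) := by
  have layer_nonneg := majorantLayer_nonneg N x₀ x
  have rpow_split (l : ℕ) : (MM m l : ℝ) ^ (-(1 - α)) = (MM m l : ℝ) ^ α * (MM m l : ℝ)⁻¹ := by
    rw [neg_sub, Real.rpow_sub_one (MM_cast_pos hm l).ne', div_eq_mul_inv]
  calc ∑ l ∈ Ico N J, (MM m l : ℝ) ^ α * ∫ t in cyl m N x₀, majorantLayer m l x t ∂μ
      ≤ ∑ l ∈ Ico N J, (MM m l : ℝ) ^ (-(1 - α)) * majorantLayer m N x₀ x := by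
        refine sum_le_sum fun l hl => ?_
        rw [rpow_split, mul_assoc]
        gcongr
        exact setIntegral_cyl_majorantLayer_le hμ (mem_Ico.1 hl).1 hx
    _ ≤ geomConst (1 - α) * (MM m N : ℝ) ^ (-(1 - α)) * majorantLayer m N x₀ x := by
        rw [← sum_mul]
        gcongr
        exact sum_Ico_MM_rpow_neg_le hm (sub_pos.2 hα1) N J
    _ = geomConst (1 - α) * ((MM m N : ℝ)⁻¹ * ((MM m N : ℝ) ^ α * majorantLayer m N x₀ x)) := by
        rw [rpow_split]
        ring

lemma setIntegral_cyl_majorant_le (hα1 : α < 1) (hm : ∀ n, 2 ≤ m n)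
    (hμ : ∀ n x, μ (cyl m n x) = (MM m n : ℝ≥0∞)⁻¹) {J N : ℕ} (hNJ : N ≤ J) {x x₀ : G m}
    (hx : x ∉ cyl m N x₀) :
    ∫ t in cyl m N x₀, majorant m α J x t ∂μ ≤
      (1 + geomConst (1 - α)) * ((MM m N : ℝ)⁻¹ * majorant m α N x₀ x) := by
  have layer_nonneg := majorantLayer_nonneg N x₀ x
  have := geomConst_pos (sub_pos.2 hα1)
  rw [integral_majorant, ← sum_range_add_sum_Ico _ (hNJ.trans J.le_succ), add_mul, one_mul]
  refine add_le_add ?coarse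
    ((sum_Ico_setIntegral_cyl_majorantLayer_le hα1 hm hμ hx (J + 1)).trans ?fine)
  case coarse =>
    rw [majorant, sum_range_succ, mul_add, mul_sum]
    refine le_add_of_le_of_nonneg (sum_le_sum fun l hl => ?_) (by positivity)
    rw [setIntegral_cyl_majorantLayer_eq hμ (mem_range.1 hl).le, mul_left_comm]
  case fine =>
    gcongr
    exact MM_rpow_mul_majorantLayer_le_majorant α le_rfl x₀ x

end MajorantIntegral

/-! ### Cesàro means of blocks -/

section Blocks

/-- The convolution of `b` with the Cesàro kernel; by `cesaroConv_eq` it is the Cesàro mean of the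
Vilenkin-Fourier series of an integrable `b`. -/
def cesaroConv (m : ℕ → ℕ) (α : ℝ) (μ : Measure (G m)) (n : ℕ) (b : G m → ℂ) (x : G m) : ℂ :=
  ∫ t, b t * cesaroKernel m α n (x - t) ∂μ

/-- A function supported in `I_N(x₀)` and bounded by `r`; an atom, apart from the normalisation
and the cancellation `∫ b = 0`. -/
structure IsBlock (m : ℕ → ℕ) (N : ℕ) (x₀ : G m) (r : ℝ) (b : G m → ℂ) : Prop where
  norm_le (t : G m) : ‖b t‖ ≤ r
  eq_zero_of_notMem (t : G m) (ht : t ∉ cyl m N x₀) : b t = 0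

/-- The constant in the pointwise bounds for Cesàro means of blocks. -/
def blockConst (α : ℝ) (B : ℕ) : ℝ :=
  6 * B ^ 2 * (1 + geomConst (1 - α) + B * geomConst 1 * geomConst α)

lemma blockConst_nonneg {α : ℝ} (hα0 : 0 < α) (hα1 : α < 1) (B : ℕ) : 0 ≤ blockConst α B := by
  have := geomConst_pos (sub_pos.2 hα1)
  have := geomConst_pos one_pos
  have := geomConst_pos hα0
  unfold blockConst
  positivity

variable {m : ℕ → ℕ} {α p : ℝ} {B : ℕ} {n N : ℕ} {x₀ : G m} {r : ℝ} {b : G m → ℂ}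

lemma IsBlock.nonneg (hb : IsBlock m N x₀ r b) : 0 ≤ r := (norm_nonneg _).trans (hb.norm_le x₀)

variable {μ : Measure (G m)} [IsProbabilityMeasure μ]

lemma norm_cesaroConv_le_setIntegral (hα0 : 0 < α) (hα1 : α ≤ 1) (hm : ∀ n, 2 ≤ m n)
    (hB : ∀ n, m n ≤ B) {J : ℕ} (hn : 1 ≤ n) (hnJ : n < MM m (J + 1)) (hb : IsBlock m N x₀ r b)
    (x : G m) :
    ‖cesaroConv m α μ n b x‖ ≤
      r * (6 * B ^ 2 * (n : ℝ) ^ (-α)) * ∫ t in cyl m N x₀, majorant m α J x t ∂μ := by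
  rw [← integral_const_mul, ← integral_indicator (measurableSet_cyl N x₀)]
  refine norm_integral_le_of_norm_le
    (((integrable_majorant α J x).const_mul _).indicator (measurableSet_cyl N x₀))
    (.of_forall fun t => ?_)
  by_cases ht : t ∈ cyl m N x₀
  · rw [Set.indicator_of_mem ht, norm_mul, mul_assoc]
    exact mul_le_mul (hb.norm_le t) (norm_cesaroKernel_sub_le_majorant hα0 hα1 hm hB hn hnJ x t)
      (norm_nonneg _) hb.nonneg
  · rw [Set.indicator_of_notMem ht, hb.eq_zero_of_notMem t ht, zero_mul, norm_zero]

lemma norm_cesaroConv_le (hα0 : 0 < α) (hα1 : α < 1) (hm : ∀ n, 2 ≤ m n) (hB : ∀ n, m n ≤ B)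
    (hμ : ∀ n x, μ (cyl m n x) = (MM m n : ℝ≥0∞)⁻¹) (hn : 1 ≤ n) (hb : IsBlock m N x₀ r b)
    (x : G m) : ‖cesaroConv m α μ n b x‖ ≤ r * blockConst α B := by
  obtain ⟨J, hJn, hnJ⟩ := exists_MM_le_lt_MM_succ hm (Nat.one_le_iff_ne_zero.1 hn)
  have hr := hb.nonneg
  have hn0 : (0 : ℝ) < n := Nat.cast_pos.2 hn
  have hg := geomConst_pos one_pos
  have hgα := geomConst_pos hα0
  have hgα' := geomConst_pos (sub_pos.2 hα1)
  have setIntegral_le : ∫ t in cyl m N x₀, majorant m α J x t ∂μ ≤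
      B * geomConst 1 * geomConst α * (MM m J : ℝ) ^ α :=
    (setIntegral_le_integral (integrable_majorant α J x)
      (.of_forall (majorant_nonneg α J x))).trans (integral_majorant_le hα0 hm hB hμ J x)
  calc ‖cesaroConv m α μ n b x‖
      ≤ r * (6 * B ^ 2 * (n : ℝ) ^ (-α)) * (B * geomConst 1 * geomConst α * (MM m J : ℝ) ^ α) :=
        (norm_cesaroConv_le_setIntegral hα0 hα1.le hm hB hn hnJ hb x).trans (by gcongr)
    _ ≤ r * (6 * B ^ 2 * (n : ℝ) ^ (-α)) * (B * geomConst 1 * geomConst α * (n : ℝ) ^ α) := by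
        gcongr
    _ = r * (6 * B ^ 2 * (B * geomConst 1 * geomConst α)) := by
        rw [Real.rpow_neg hn0.le]
        field_simp
    _ ≤ r * blockConst α B := by
        unfold blockConst
        gcongr
        exact le_add_of_nonneg_left (by positivity)

lemma norm_cesaroConv_le_of_notMem (hα0 : 0 < α) (hα1 : α < 1) (hm : ∀ n, 2 ≤ m n)
    (hB : ∀ n, m n ≤ B) (hμ : ∀ n x, μ (cyl m n x) = (MM m n : ℝ≥0∞)⁻¹) (hn : MM m N ≤ n)
    (hb : IsBlock m N x₀ r b) {x : G m} (hx : x ∉ cyl m N x₀) :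
    ‖cesaroConv m α μ n b x‖ ≤
      r * blockConst α B * ((n : ℝ) ^ (-α) * (MM m N : ℝ)⁻¹ * majorant m α N x₀ x) := by
  have hn1 : 1 ≤ n := (MM_pos hm N).trans_le hn
  obtain ⟨J, -, hnJ⟩ := exists_MM_le_lt_MM_succ hm (Nat.one_le_iff_ne_zero.1 hn1)
  have hNJ : N ≤ J := by
    by_contra! hJN
    exact (hnJ.trans_le (monotone_MM hm hJN)).not_ge hn
  have hr := hb.nonneg
  have hg := geomConst_pos one_pos
  have hgα := geomConst_pos hα0
  have hmaj := majorant_nonneg α N x₀ x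
  calc ‖cesaroConv m α μ n b x‖
      ≤ r * (6 * B ^ 2 * (n : ℝ) ^ (-α)) *
          ((1 + geomConst (1 - α)) * ((MM m N : ℝ)⁻¹ * majorant m α N x₀ x)) := by
        refine (norm_cesaroConv_le_setIntegral hα0 hα1.le hm hB hn1 hnJ hb x).trans ?_
        gcongr
        exact setIntegral_cyl_majorant_le hα1 hm hμ hNJ hx
    _ = r * (6 * B ^ 2 * (1 + geomConst (1 - α))) *
          ((n : ℝ) ^ (-α) * (MM m N : ℝ)⁻¹ * majorant m α N x₀ x) := by ring
    _ ≤ r * blockConst α B * ((n : ℝ) ^ (-α) * (MM m N : ℝ)⁻¹ * majorant m α N x₀ x) := by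
        unfold blockConst
        gcongr ?_ * (_ * ?_) * _
        exact le_add_of_nonneg_right (by positivity)

lemma lintegral_nnnorm_rpow_le {X : Type*} [MeasurableSpace X] {ν : Measure X} {F : X → ℂ}
    {g : X → ℝ} (hp : 0 ≤ p) (hg : Integrable g ν) (hFg : ∀ x, ‖F x‖ ^ p ≤ g x) :
    ∫⁻ x, (‖F x‖₊ : ℝ≥0∞) ^ p ∂ν ≤ ENNReal.ofReal (∫ x, g x ∂ν) := by
  rw [ofReal_integral_eq_lintegral_ofReal hg
    (.of_forall fun x => (Real.rpow_nonneg (norm_nonneg _) p).trans (hFg x))]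
  refine lintegral_mono fun x => ?_
  rw [← enorm_eq_nnnorm, ← ofReal_norm, ENNReal.ofReal_rpow_of_nonneg (norm_nonneg _) hp]
  exact ENNReal.ofReal_le_ofReal (hFg x)

lemma rpow_mul_rpow_eq_inv_mul_div_rpow {x y : ℝ} (hαp : α * p = 1 - p) (hx : 0 < x)
    (hy : 0 < y) : (x ^ (-α) * y⁻¹) ^ p = y⁻¹ * (y / x) ^ (1 - p) := by
  rw [Real.mul_rpow (by positivity) (by positivity), ← Real.rpow_mul hx.le, neg_mul, hαp,
    Real.div_rpow hy.le hx.le, Real.inv_rpow hy.le, Real.rpow_neg hx.le, Real.rpow_sub hy,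
    Real.rpow_one]
  field_simp

lemma norm_cesaroConv_rpow_le (hα0 : 0 < α) (hα1 : α < 1) (hp0 : 0 ≤ p) (hm : ∀ n, 2 ≤ m n)
    (hB : ∀ n, m n ≤ B) (hμ : ∀ n x, μ (cyl m n x) = (MM m n : ℝ≥0∞)⁻¹) (hn : MM m N ≤ n)
    (hb : IsBlock m N x₀ r b) (x : G m) :
    ‖cesaroConv m α μ n b x‖ ^ p ≤ (r * blockConst α B) ^ p * ((cyl m N x₀).indicator 1 x +
      ((n : ℝ) ^ (-α) * (MM m N : ℝ)⁻¹) ^ p * majorant m α N x₀ x ^ p) := by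
  have hrC : 0 ≤ r * blockConst α B := mul_nonneg hb.nonneg (blockConst_nonneg hα0 hα1 B)
  have hmaj := majorant_nonneg α N x₀ x
  by_cases hx : x ∈ cyl m N x₀
  · rw [Set.indicator_of_mem hx, Pi.one_apply]
    calc ‖cesaroConv m α μ n b x‖ ^ p ≤ (r * blockConst α B) ^ p := by
          gcongr
          exact norm_cesaroConv_le hα0 hα1 hm hB hμ ((MM_pos hm N).trans_le hn) hb x
      _ ≤ _ := le_mul_of_one_le_right (by positivity) (le_add_of_nonneg_right (by positivity))
  · rw [Set.indicator_of_notMem hx, zero_add, ← Real.mul_rpow (by positivity) hmaj,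
      ← Real.mul_rpow hrC (by positivity)]
    exact Real.rpow_le_rpow (norm_nonneg _)
      (norm_cesaroConv_le_of_notMem hα0 hα1 hm hB hμ hn hb hx) hp0

lemma lintegral_cesaroConv_rpow_le (hα0 : 0 < α) (hα1 : α < 1) (hp0 : 0 < p) (hp1 : p ≤ 1)
    (hαp : α * p = 1 - p) (hm : ∀ n, 2 ≤ m n) (hB : ∀ n, m n ≤ B)
    (hμ : ∀ n x, μ (cyl m n x) = (MM m n : ℝ≥0∞)⁻¹) (hn : MM m N ≤ n) (hb : IsBlock m N x₀ r b) :
    ∫⁻ x, (‖cesaroConv m α μ n b x‖₊ : ℝ≥0∞) ^ p ∂μ ≤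
      ENNReal.ofReal ((r * blockConst α B) ^ p * (MM m N : ℝ)⁻¹ *
        (1 + (N + 1) * (B * geomConst p) * (MM m N / n : ℝ) ^ (1 - p))) := by
  have hn0 : (0 : ℝ) < n := Nat.cast_pos.2 ((MM_pos hm N).trans_le hn)
  have hrC : 0 ≤ r * blockConst α B := mul_nonneg hb.nonneg (blockConst_nonneg hα0 hα1 B)
  obtain ⟨majorant_integrable, majorant_le⟩ :=
    integral_majorant_rpow_le hp0 hp1 hαp hm hB hμ N x₀
  have cyl_integrable : Integrable ((cyl m N x₀).indicator (1 : G m → ℝ)) μ :=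
    (integrable_const 1).indicator (measurableSet_cyl N x₀)
  refine (lintegral_nnnorm_rpow_le hp0.le
    ((cyl_integrable.add (majorant_integrable.const_mul _)).const_mul _)
    (norm_cesaroConv_rpow_le hα0 hα1 hp0.le hm hB hμ hn hb)).trans (ENNReal.ofReal_le_ofReal ?_)
  simp only [Pi.add_apply]
  rw [integral_const_mul, integral_add cyl_integrable (majorant_integrable.const_mul _),
    integral_indicator_one (measurableSet_cyl N x₀), real_cyl hμ, integral_const_mul,
    rpow_mul_rpow_eq_inv_mul_div_rpow hαp hn0 (MM_cast_pos hm N)]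
  calc (r * blockConst α B) ^ p * ((MM m N : ℝ)⁻¹ +
        (MM m N : ℝ)⁻¹ * (MM m N / n : ℝ) ^ (1 - p) * ∫ x, majorant m α N x₀ x ^ p ∂μ)
      ≤ (r * blockConst α B) ^ p * ((MM m N : ℝ)⁻¹ +
        (MM m N : ℝ)⁻¹ * (MM m N / n : ℝ) ^ (1 - p) * ((N + 1) * (B * geomConst p))) := by gcongr
    _ = _ := by ring

end Blocks

/-! ### Strong summability of the Cesàro means of an atom -/

section LogarithmicSums

lemma rpow_neg_mul_one_add_div_le {e : ℝ} (he0 : 0 ≤ e) (he1 : e ≤ 1) {x : ℝ} (hx : 0 < x) :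
    (x + 1) ^ (-e) * (1 + e / (x + 1)) ≤ x ^ (-e) := by
  have bernoulli := rpow_sub_one_mul_one_add_div_le he0 he1 (x := x + 1) (by linarith)
  rw [add_sub_cancel_right] at bernoulli
  rw [Real.rpow_neg hx.le, Real.rpow_neg (by positivity), inv_mul_le_iff₀ (by positivity),
    ← div_eq_mul_inv, le_div_iff₀ (by positivity), mul_comm]
  exact bernoulli

lemma sum_Icc_rpow_neg_div_le {e : ℝ} (he0 : 0 < e) (he1 : e ≤ 1) {M R : ℕ} (hM : 1 ≤ M)
    (hMR : M ≤ R) :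
    ∑ k ∈ Icc M R, (k : ℝ) ^ (-e) / k ≤
      (1 + e⁻¹) * (M : ℝ) ^ (-e) - e⁻¹ * (R : ℝ) ^ (-e) := by
  induction R, hMR using Nat.le_induction with
  | base =>
    have : (M : ℝ) ^ (-e) / M ≤ (M : ℝ) ^ (-e) :=
      div_le_self (by positivity) (Nat.one_le_cast.2 hM)
    rw [Icc_self, sum_singleton]
    linarith
  | succ R hMR ih =>
    have hR : (0 : ℝ) < R := Nat.cast_pos.2 (hM.trans hMR)
    have telescope : ((R : ℝ) + 1) ^ (-e) / (R + 1) ≤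
        e⁻¹ * ((R : ℝ) ^ (-e) - ((R : ℝ) + 1) ^ (-e)) := by
      rw [le_inv_mul_iff₀ he0, le_sub_iff_add_le]
      refine le_of_eq_of_le ?_ (rpow_neg_mul_one_add_div_le he0.le he1 hR)
      ring
    rw [sum_Icc_succ_top (by omega)]
    push_cast
    linarith

lemma sum_Icc_div_rpow_div_le {e : ℝ} (he0 : 0 < e) (he1 : e ≤ 1) {M : ℕ} (hM : 1 ≤ M) (R : ℕ) :
    ∑ k ∈ Icc M R, (M / k : ℝ) ^ e / k ≤ 1 + e⁻¹ := by
  rcases lt_or_ge R M with hRM | hMR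
  · rw [Icc_eq_empty_of_lt hRM, sum_empty]
    positivity
  have hM0 : (0 : ℝ) < M := Nat.cast_pos.2 hM
  calc ∑ k ∈ Icc M R, (M / k : ℝ) ^ e / k = (M : ℝ) ^ e * ∑ k ∈ Icc M R, (k : ℝ) ^ (-e) / k := by
        rw [mul_sum]
        refine sum_congr rfl fun k _ => ?_
        rw [Real.div_rpow hM0.le k.cast_nonneg, Real.rpow_neg k.cast_nonneg]
        ring
    _ ≤ (M : ℝ) ^ e * ((1 + e⁻¹) * (M : ℝ) ^ (-e)) := by
        gcongr
        exact (sum_Icc_rpow_neg_div_le he0 he1 hM hMR).trans (sub_le_self _ (by positivity))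
    _ = 1 + e⁻¹ := by
        rw [mul_left_comm, ← Real.rpow_add hM0, add_neg_cancel, Real.rpow_zero, mul_one]

lemma log_two_le_log {R : ℕ} (hR : 2 ≤ R) : Real.log 2 ≤ Real.log R :=
  Real.log_le_log two_pos (by exact_mod_cast hR)

lemma sum_Icc_inv_le_three_mul_log {R : ℕ} (hR : 2 ≤ R) :
    ∑ k ∈ Icc 1 R, (k : ℝ)⁻¹ ≤ 3 * Real.log R := by
  have harmonic_le := harmonic_le_one_add_log R
  rw [harmonic_eq_sum_Icc] at harmonic_le
  push_cast at harmonic_le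
  linarith [log_two_le_log hR, Real.log_two_gt_d9]

lemma add_one_le_four_mul_log {N R : ℕ} (hR : 2 ≤ R) (hNR : 2 ^ N ≤ R) :
    (N + 1 : ℝ) ≤ 4 * Real.log R := by
  have log_le : N * Real.log 2 ≤ Real.log R := by
    rw [← Real.log_pow]
    exact Real.log_le_log (by positivity) (by exact_mod_cast hNR)
  nlinarith [log_two_le_log hR, Real.log_two_gt_d9, N.cast_nonneg (α := ℝ)]

end LogarithmicSums

section Atoms

/-- The functional `∑_{k=1}^R ‖σ_k^α b‖_p^p / k` that measures strong summability. -/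
def strongSum (m : ℕ → ℕ) (α : ℝ) (μ : Measure (G m)) (p : ℝ) (R : ℕ) (b : G m → ℂ) : ℝ≥0∞ :=
  ∑ k ∈ Icc 1 R, (∫⁻ x, (‖cesaroConv m α μ k b x‖₊ : ℝ≥0∞) ^ p ∂μ) / k

/-- The constant in the strong summability estimate for atoms. -/
def atomConst (α p : ℝ) (B : ℕ) : ℝ :=
  blockConst α B ^ p * (3 + 4 * (B * geomConst p) * (1 + (1 - p)⁻¹))

variable {m : ℕ → ℕ} {α p : ℝ} {B : ℕ} {n N R : ℕ} {x₀ : G m} {r : ℝ} {b : G m → ℂ}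

lemma cesaroKernel_congr (hm : ∀ n, 2 ≤ m n) (hn : n ≤ MM m N) {x y : G m}
    (hxy : ∀ j < N, x j = y j) : cesaroKernel m α n x = cesaroKernel m α n y := by
  unfold cesaroKernel D
  congr 1
  refine sum_congr rfl fun k hk => congrArg _ <| sum_congr rfl fun i hi => psi_congr hm ?_ hxy
  rw [mem_range] at hk hi
  omega

variable {μ : Measure (G m)}

lemma cesaroConv_eq_zero (hm : ∀ n, 2 ≤ m n) (hn : n ≤ MM m N) (hb : IsBlock m N x₀ r b)
    (hb0 : ∫ t, b t ∂μ = 0) (x : G m) : cesaroConv m α μ n b x = 0 := by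
  have kernel_const (t : G m) :
      b t * cesaroKernel m α n (x - t) = b t * cesaroKernel m α n (x - x₀) := by
    by_cases ht : t ∈ cyl m N x₀
    · exact congrArg _ <| cesaroKernel_congr hm hn fun j hj => by
        rw [Pi.sub_apply, Pi.sub_apply, ht j hj]
    · rw [hb.eq_zero_of_notMem t ht, zero_mul, zero_mul]
  simp only [cesaroConv, kernel_const]
  rw [integral_mul_const, hb0, zero_mul]

lemma strongSum_eq_sum_Icc_MM (hp0 : 0 < p) (hm : ∀ n, 2 ≤ m n) (hb : IsBlock m N x₀ r b)
    (hb0 : ∫ t, b t ∂μ = 0 ∨ N = 0) :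
    strongSum m α μ p R b =
      ∑ k ∈ Icc (MM m N) R, (∫⁻ x, (‖cesaroConv m α μ k b x‖₊ : ℝ≥0∞) ^ p ∂μ) / k := by
  refine (sum_subset (Icc_subset_Icc_left (MM_pos hm N)) fun k hk hkN => ?_).symm
  rw [mem_Icc] at hk hkN
  have hkN : k < MM m N := by omega
  have mean_zero : ∫ t, b t ∂μ = 0 := by
    refine hb0.resolve_right ?_
    rintro rfl
    rw [MM] at hkN
    omega
  simp [cesaroConv_eq_zero hm hkN.le hb mean_zero, hp0]

variable [IsProbabilityMeasure μ]

lemma strongSum_le_ofReal_sum (hα0 : 0 < α) (hα1 : α < 1) (hp0 : 0 < p) (hp1 : p ≤ 1)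
    (hαp : α * p = 1 - p) (hm : ∀ n, 2 ≤ m n) (hB : ∀ n, m n ≤ B)
    (hμ : ∀ n x, μ (cyl m n x) = (MM m n : ℝ≥0∞)⁻¹) (hb : IsBlock m N x₀ r b)
    (hb0 : ∫ t, b t ∂μ = 0 ∨ N = 0) :
    strongSum m α μ p R b ≤ ENNReal.ofReal (∑ k ∈ Icc (MM m N) R,
      (r * blockConst α B) ^ p * (MM m N : ℝ)⁻¹ *
        (1 + (N + 1) * (B * geomConst p) * (MM m N / k : ℝ) ^ (1 - p)) / k) := by
  have := hb.nonneg
  have := blockConst_nonneg hα0 hα1 B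
  have := geomConst_pos hp0
  rw [strongSum_eq_sum_Icc_MM hp0 hm hb hb0, ENNReal.ofReal_sum_of_nonneg fun k _ => by positivity]
  refine sum_le_sum fun k hk => ?_
  have hk := (mem_Icc.1 hk).1
  have hk0 : (0 : ℝ) < k := Nat.cast_pos.2 ((MM_pos hm N).trans_le hk)
  rw [ENNReal.ofReal_div_of_pos hk0, ENNReal.ofReal_natCast]
  gcongr
  exact lintegral_cesaroConv_rpow_le hα0 hα1 hp0 hp1 hαp hm hB hμ hk hb

-- The number `N + 1` of layers of the majorant is absorbed by `log R`, as `2 ^ N ≤ M_N ≤ R`.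
lemma strongSum_le_of_isBlock (hα0 : 0 < α) (hα1 : α < 1) (hp0 : 0 < p) (hp1 : p < 1)
    (hαp : α * p = 1 - p) (hm : ∀ n, 2 ≤ m n) (hB : ∀ n, m n ≤ B)
    (hμ : ∀ n x, μ (cyl m n x) = (MM m n : ℝ≥0∞)⁻¹) (hR : 2 ≤ R) (hb : IsBlock m N x₀ r b)
    (hb0 : ∫ t, b t ∂μ = 0 ∨ N = 0) :
    strongSum m α μ p R b ≤
      ENNReal.ofReal (atomConst α p B * Real.log R * r ^ p * (MM m N : ℝ)⁻¹) := by
  rcases lt_or_ge R (MM m N) with hRM | hMR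
  · rw [strongSum_eq_sum_Icc_MM hp0 hm hb hb0, Icc_eq_empty_of_lt hRM, sum_empty]
    exact zero_le
  refine (strongSum_le_ofReal_sum hα0 hα1 hp0 hp1.le hαp hm hB hμ hb hb0).trans
    (ENNReal.ofReal_le_ofReal ?_)
  have hC := blockConst_nonneg hα0 hα1 B
  have hr := hb.nonneg
  have := geomConst_pos hp0
  have h1p : 0 < 1 - p := sub_pos.2 hp1
  have layers_le : (N + 1 : ℝ) ≤ 4 * Real.log R := by
    have two_pow_le := two_pow_mul_MM_le_MM_add hm 0 N
    rw [zero_add, MM, mul_one] at two_pow_le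
    exact add_one_le_four_mul_log hR (two_pow_le.trans hMR)
  have harmonic_le : ∑ k ∈ Icc (MM m N) R, (k : ℝ)⁻¹ ≤ 3 * Real.log R :=
    (sum_le_sum_of_subset_of_nonneg (Icc_subset_Icc_left (MM_pos hm N))
      fun k _ _ => by positivity).trans (sum_Icc_inv_le_three_mul_log hR)
  calc ∑ k ∈ Icc (MM m N) R, (r * blockConst α B) ^ p * (MM m N : ℝ)⁻¹ *
        (1 + (N + 1) * (B * geomConst p) * (MM m N / k : ℝ) ^ (1 - p)) / k
      = (r * blockConst α B) ^ p * (MM m N : ℝ)⁻¹ * (∑ k ∈ Icc (MM m N) R, (k : ℝ)⁻¹ +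
        (N + 1) * (B * geomConst p) * ∑ k ∈ Icc (MM m N) R, (MM m N / k : ℝ) ^ (1 - p) / k) := by
        rw [mul_sum, ← sum_add_distrib, mul_sum]
        exact sum_congr rfl fun k _ => by ring
    _ ≤ (r * blockConst α B) ^ p * (MM m N : ℝ)⁻¹ * (3 * Real.log R +
        4 * Real.log R * (B * geomConst p) * (1 + (1 - p)⁻¹)) := by
        gcongr
        exact sum_Icc_div_rpow_div_le h1p (by linarith) (MM_pos hm N) R
    _ = atomConst α p B * Real.log R * r ^ p * (MM m N : ℝ)⁻¹ := by
        rw [Real.mul_rpow hr hC, atomConst]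
        ring

end Atoms

/-! ### Cesàro means of integrable functions -/

section Subadditivity

variable {m : ℕ → ℕ}

lemma measurable_rade (k : ℕ) : Measurable (rade m k) :=
  (measurable_from_top (f := fun a : ZMod (m k) =>
    Complex.exp (2 * Real.pi * Complex.I * (a.val : ℂ) / (m k : ℂ)))).comp (measurable_pi_apply k)

lemma measurable_psi (n : ℕ) : Measurable (psi m n) :=
  Finset.measurable_prod _ fun k _ => (measurable_rade k).pow_const _

variable {μ : Measure (G m)} {α p : ℝ} {g h : G m → ℂ}

lemma integrable_mul_conj_psi (hm : ∀ n, 2 ≤ m n) (hg : Integrable g μ) (i : ℕ) :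
    Integrable (fun t => g t * (starRingEnd ℂ) (psi m i t)) μ :=
  hg.mul_bdd (c := 1)
    (Complex.continuous_conj.measurable.comp (measurable_psi i)).aestronglyMeasurable
    (.of_forall fun t => by rw [RCLike.norm_conj, norm_psi hm])

lemma mul_D_sub (hm : ∀ n, 2 ≤ m n) (k : ℕ) (x t : G m) :
    g t * D m k (x - t) =
      ∑ i ∈ range k, g t * (starRingEnd ℂ) (psi m i t) * psi m i x := by
  rw [D, mul_sum]
  exact sum_congr rfl fun i _ => by rw [psi_sub hm]; ring

lemma integrable_mul_D_sub (hm : ∀ n, 2 ≤ m n) (hg : Integrable g μ) (k : ℕ) (x : G m) :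
    Integrable (fun t => g t * D m k (x - t)) μ := by
  simp only [mul_D_sub hm]
  exact integrable_finsetSum _ fun i _ => (integrable_mul_conj_psi hm hg i).mul_const _

lemma integral_mul_D_sub (hm : ∀ n, 2 ≤ m n) (hg : Integrable g μ) (k : ℕ) (x : G m) :
    ∫ t, g t * D m k (x - t) ∂μ = fS m μ g k x := by
  simp only [mul_D_sub hm]
  rw [integral_finsetSum _ fun i _ => (integrable_mul_conj_psi hm hg i).mul_const _]
  exact sum_congr rfl fun i _ => integral_mul_const _ _

lemma cesaroKernel_eq_sum_Icc (n : ℕ) (y : G m) :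
    cesaroKernel m α n y =
      ((AC α n : ℝ) : ℂ)⁻¹ * ∑ k ∈ Icc 1 n, ((AC (α - 1) (n - k) : ℝ) : ℂ) * D m k y := by
  have vanishing : AC (α - 1) (n - 0) • D m 0 y = 0 := by rw [D, range_zero, sum_empty, smul_zero]
  have last : AC (α - 1) (n - n) • D m n y = 0 := by rw [Nat.sub_self, AC_zero, zero_smul]
  rw [cesaroKernel, Complex.real_smul, Complex.ofReal_inv]
  simp only [← Complex.real_smul (z := D m _ y)]
  rw [← add_zero (∑ k ∈ range n, _), ← last, ← sum_range_succ, range_eq_Ico,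
    sum_eq_sum_Ico_succ_bot n.succ_pos, vanishing, zero_add]
  rfl

lemma cesaroConv_eq (hm : ∀ n, 2 ≤ m n) (hg : Integrable g μ) (n : ℕ) (x : G m) :
    cesaroConv m α μ n g x =
      ((AC α n : ℝ) : ℂ)⁻¹ * ∑ k ∈ Icc 1 n, ((AC (α - 1) (n - k) : ℝ) : ℂ) * fS m μ g k x := by
  have expand (t : G m) : g t * cesaroKernel m α n (x - t) = ((AC α n : ℝ) : ℂ)⁻¹ *
      ∑ k ∈ Icc 1 n, ((AC (α - 1) (n - k) : ℝ) : ℂ) * (g t * D m k (x - t)) := by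
    rw [cesaroKernel_eq_sum_Icc, mul_left_comm, mul_sum]
    simp only [mul_left_comm (g t)]
  simp only [cesaroConv, expand]
  rw [integral_const_mul,
    integral_finsetSum _ fun k _ => (integrable_mul_D_sub hm hg k x).const_mul _]
  simp only [integral_const_mul, integral_mul_D_sub hm hg]

lemma measurable_cesaroConv (hm : ∀ n, 2 ≤ m n) (hg : Integrable g μ) (n : ℕ) :
    Measurable (cesaroConv m α μ n g) := by
  rw [funext (cesaroConv_eq hm hg n)]
  exact .const_mul (Finset.measurable_sum _ fun k _ => .const_mul
    (Finset.measurable_sum _ fun i _ => (measurable_psi i).const_mul _) _) _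

lemma integrable_mul_cesaroKernel_sub (hm : ∀ n, 2 ≤ m n) (hg : Integrable g μ) (n : ℕ)
    (x : G m) : Integrable (fun t => g t * cesaroKernel m α n (x - t)) μ := by
  simp only [cesaroKernel_eq_sum_Icc, mul_left_comm (g _), mul_sum]
  exact integrable_finsetSum _ fun k _ =>
    ((integrable_mul_D_sub hm hg k x).const_mul _).const_mul _

lemma cesaroConv_add (hm : ∀ n, 2 ≤ m n) (hg : Integrable g μ) (hh : Integrable h μ) (n : ℕ)
    (x : G m) :
    cesaroConv m α μ n (g + h) x = cesaroConv m α μ n g x + cesaroConv m α μ n h x := by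
  simp only [cesaroConv, Pi.add_apply, add_mul]
  exact integral_add (integrable_mul_cesaroKernel_sub hm hg n x)
    (integrable_mul_cesaroKernel_sub hm hh n x)

lemma strongSum_add_le (hp0 : 0 ≤ p) (hp1 : p ≤ 1) (hm : ∀ n, 2 ≤ m n) (R : ℕ)
    (hg : Integrable g μ) (hh : Integrable h μ) :
    strongSum m α μ p R (g + h) ≤ strongSum m α μ p R g + strongSum m α μ p R h := by
  unfold strongSum
  rw [← sum_add_distrib]
  refine sum_le_sum fun k _ => ?_
  rw [← ENNReal.add_div,
    ← lintegral_add_left ((measurable_cesaroConv hm hg k).nnnorm.coe_nnreal_ennreal.pow_const p)]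
  refine ENNReal.div_le_div_right (lintegral_mono fun x => ?_) _
  rw [cesaroConv_add hm hg hh]
  calc (‖cesaroConv m α μ k g x + cesaroConv m α μ k h x‖₊ : ℝ≥0∞) ^ p
      ≤ (‖cesaroConv m α μ k g x‖₊ + ‖cesaroConv m α μ k h x‖₊) ^ p :=
        ENNReal.rpow_le_rpow (mod_cast nnnorm_add_le _ _) hp0
    _ ≤ _ := ENNReal.rpow_add_le_add_rpow _ _ hp0 hp1

lemma strongSum_zero (hp0 : 0 < p) (R : ℕ) : strongSum m α μ p R 0 = 0 := by
  simp [strongSum, cesaroConv, hp0]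

end Subadditivity

/-! ### Martingales and their Vilenkin-Fourier coefficients -/

section Martingales

variable {m : ℕ → ℕ}

lemma eq_of_measurable_filt {n : ℕ} {g : G m → ℂ} (hg : Measurable[filt m n] g) {x y : G m}
    (hxy : x ∈ cyl m n y) : g x = g y := by
  obtain ⟨s, -, hs⟩ := hg (MeasurableSet.singleton (g y))
  have hy : y ∈ g ⁻¹' {g y} := rfl
  have restrict_eq : (fun i : Fin n => x i) = fun i : Fin n => y i := funext fun i => hxy i i.2
  rw [← hs, Set.mem_preimage, ← restrict_eq] at hy
  exact (Set.ext_iff.1 hs x).1 hy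

lemma measurableSet_filt_cyl {n k : ℕ} (hnk : n ≤ k) (x : G m) :
    MeasurableSet[filt m k] (cyl m n x) := by
  refine ⟨⋂ i : Fin k, ⋂ _ : i.val < n, {z | z i = x i}, .iInter fun i => .iInter fun _ =>
    (measurable_pi_apply i : Measurable fun z : ∀ i : Fin k, ZMod (m i) => z i)
      (MeasurableSet.singleton (x i)), ?_⟩
  ext y
  simp only [Set.mem_preimage, Set.mem_iInter, Set.mem_ofPred_eq, cyl]
  exact ⟨fun h j hj => h ⟨j, by omega⟩ hj, fun h i hi => h i hi⟩

lemma cyl_zero (x : G m) : cyl m 0 x = Set.univ :=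
  Set.eq_univ_of_forall fun _ _ hj => absurd hj (Nat.not_lt_zero _)

lemma mem_cyl_succ_update {j : ℕ} {x t : G m} {a : ZMod (m j)} :
    t ∈ cyl m (j + 1) (Function.update x j a) ↔ t ∈ cyl m j x ∧ t j = a := by
  refine ⟨fun h => ⟨fun i hi => ?_, ?_⟩, fun ⟨h, ha⟩ i hi => ?_⟩
  · rw [h i (by omega), Function.update_of_ne hi.ne]
  · rw [h j j.lt_succ_self, Function.update_self]
  · rcases eq_or_ne i j with rfl | hij
    · rw [Function.update_self, ha]
    · rw [Function.update_of_ne hij, h i (by omega)]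

lemma cyl_eq_iUnion (j : ℕ) (x : G m) :
    cyl m j x = ⋃ a, cyl m (j + 1) (Function.update x j a) := by
  ext t
  simp only [Set.mem_iUnion, mem_cyl_succ_update, exists_and_left, exists_eq', and_true]

lemma pairwise_disjoint_cyl_succ_update (j : ℕ) (x : G m) :
    Pairwise (Function.onFun Disjoint fun a => cyl m (j + 1) (Function.update x j a)) :=
  fun _ _ hab => Set.disjoint_left.2 fun _ ha hb =>
    hab ((mem_cyl_succ_update.1 ha).2.symm.trans (mem_cyl_succ_update.1 hb).2)

variable {μ : Measure (G m)}

lemma setIntegral_cyl_eq_sum (j : ℕ) [NeZero (m j)] (x : G m) {F : G m → ℂ}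
    (hF : Integrable F μ) :
    ∫ t in cyl m j x, F t ∂μ = ∑ a, ∫ t in cyl m (j + 1) (Function.update x j a), F t ∂μ := by
  rw [cyl_eq_iUnion, integral_iUnion_fintype (fun _ => measurableSet_cyl _ _)
    (pairwise_disjoint_cyl_succ_update j x) fun _ => hF.integrableOn]

lemma setLIntegral_cyl_eq_sum (j : ℕ) [NeZero (m j)] (x : G m) (F : G m → ℝ≥0∞) :
    ∫⁻ t in cyl m j x, F t ∂μ = ∑ a, ∫⁻ t in cyl m (j + 1) (Function.update x j a), F t ∂μ := by
  rw [cyl_eq_iUnion, lintegral_iUnion (fun _ => measurableSet_cyl _ _)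
    (pairwise_disjoint_cyl_succ_update j x), tsum_fintype]

lemma setIntegral_cyl_eq_of_forall (hm : ∀ n, 2 ≤ m n) {F₁ F₂ : G m → ℂ}
    (hF₁ : Integrable F₁ μ) (hF₂ : Integrable F₂ μ) {j N : ℕ} (hjN : j ≤ N)
    (h : ∀ x, ∫ t in cyl m N x, F₁ t ∂μ = ∫ t in cyl m N x, F₂ t ∂μ) (x : G m) :
    ∫ t in cyl m j x, F₁ t ∂μ = ∫ t in cyl m j x, F₂ t ∂μ := by
  induction hjN using Nat.decreasingInduction generalizing x with
  | self => exact h x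
  | of_succ j _ ih =>
    have := neZero_of_two_le hm j
    rw [setIntegral_cyl_eq_sum j x hF₁, setIntegral_cyl_eq_sum j x hF₂]
    exact sum_congr rfl fun a _ => ih _

variable {f : ℕ → G m → ℂ}

lemma setIntegral_cyl_martingale (hf : IsMartingale m μ f) {j N : ℕ} (hjN : j ≤ N) (x : G m) :
    ∫ t in cyl m j x, f N t ∂μ = ∫ t in cyl m j x, f j t ∂μ := by
  induction N, hjN using Nat.le_induction with
  | base => rfl
  | succ N hjN ih => rw [hf.2.2 N _ (measurableSet_filt_cyl hjN x), ih]

lemma fcoef_martingale (hm : ∀ n, 2 ≤ m n) (hf : IsMartingale m μ f) {i N k : ℕ}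
    (hi : i < MM m N) (hNk : N ≤ k) : fcoef m μ (f k) i = fcoef m μ (f N) i := by
  have psi_const (l : ℕ) (x : G m) :
      ∫ t in cyl m N x, f l t * (starRingEnd ℂ) (psi m i t) ∂μ =
        (∫ t in cyl m N x, f l t ∂μ) * (starRingEnd ℂ) (psi m i x) := by
    rw [← integral_mul_const]
    exact setIntegral_congr_fun (measurableSet_cyl N x) fun t ht => by
      simp only [psi_congr hm hi ht]
  have on_cyl := setIntegral_cyl_eq_of_forall hm (integrable_mul_conj_psi hm (hf.1 k) i)
    (integrable_mul_conj_psi hm (hf.1 N) i) N.zero_le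
    (fun x => by rw [psi_const, psi_const, setIntegral_cyl_martingale hf hNk]) 0
  rwa [cyl_zero, setIntegral_univ, setIntegral_univ] at on_cyl

lemma mcoef_eq_fcoef (hm : ∀ n, 2 ≤ m n) (hf : IsMartingale m μ f) {i N : ℕ}
    (hi : i < MM m N) : mcoef m μ f i = fcoef m μ (f N) i :=
  Tendsto.limUnder_eq <| tendsto_const_nhds.congr' <| (eventually_ge_atTop N).mono
    fun _ hk => (fcoef_martingale hm hf hi hk).symm

lemma mCes_eq_cesaroConv (hm : ∀ n, 2 ≤ m n) {α : ℝ} (hf : IsMartingale m μ f) {k N : ℕ}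
    (hk : k ≤ MM m N) (x : G m) : mCes m α μ f k x = cesaroConv m α μ k (f N) x := by
  rw [cesaroConv_eq hm (hf.1 N), mCes]
  congr 1
  refine sum_congr rfl fun j hj => congrArg _ <| sum_congr rfl fun i hi => ?_
  rw [mem_Icc] at hj
  rw [mem_range] at hi
  rw [mcoef_eq_fcoef hm hf (by omega : i < MM m N)]

end Martingales

/-! ### From atoms to martingales -/

section AtomicDecomposition

/-- A nonnegative functional that is subadditive on integrable functions and satisfies on atoms the
bound `A r ^ p μ(I)` appropriate for `H_p`. The cancellation `∫ b = 0` is not required of blocks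
supported in `I_0 = G_m`. -/
structure IsBoundedOnAtoms (m : ℕ → ℕ) (μ : Measure (G m)) (p : ℝ) (A : ℝ≥0∞)
    (T : (G m → ℂ) → ℝ≥0∞) : Prop where
  map_zero : T 0 = 0
  map_add_le {g h : G m → ℂ} : Integrable g μ → Integrable h μ → T (g + h) ≤ T g + T h
  le_of_isBlock {N : ℕ} {x₀ : G m} {r : ℝ} {b : G m → ℂ} : IsBlock m N x₀ r b →
    (∫ t, b t ∂μ = 0 ∨ N = 0) → T b ≤ A * ENNReal.ofReal r ^ p * μ (cyl m N x₀)

/-- The martingale maximal function `f* = sup_n |f^{(n)}|`. -/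
def maximalFunction (m : ℕ → ℕ) (f : ℕ → G m → ℂ) (x : G m) : ℝ≥0∞ := ⨆ n, (‖f n x‖₊ : ℝ≥0∞)

/-- The weight `(2 f*)^p - r^p`, truncated at zero, which pays for the atoms above height `r`. -/
def excess (m : ℕ → ℕ) (p : ℝ) (f : ℕ → G m → ℂ) (r : ℝ) (x : G m) : ℝ≥0∞ :=
  (2 * maximalFunction m f x) ^ p - ENNReal.ofReal r ^ p

/-- `h` is a truncation of `f^{(N)}` at height `r` on the interval `I_j(x₀)`: a function of the
same mean on that interval, bounded by `r`, for which `T` of the error is controlled by the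
excess of `f` over `r`. -/
structure IsTruncation (m : ℕ → ℕ) (μ : Measure (G m)) (p : ℝ) (C : ℝ≥0∞)
    (T : (G m → ℂ) → ℝ≥0∞) (f : ℕ → G m → ℂ) (N j : ℕ) (x₀ : G m) (r : ℝ) (h : G m → ℂ) :
    Prop where
  isBlock : IsBlock m j x₀ r h
  integrable : Integrable h μ
  integral_eq : ∫ t, h t ∂μ = ∫ t in cyl m j x₀, f N t ∂μ
  map_sub_le : T ((cyl m j x₀).indicator (f N) - h) ≤ C * ∫⁻ t in cyl m j x₀, excess m p f r t ∂μ

variable {m : ℕ → ℕ}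

section Blocks

variable {N j : ℕ} {x₀ : G m} {r s : ℝ}

lemma IsBlock.sub {b c : G m → ℂ} (hb : IsBlock m N x₀ r b) (hc : IsBlock m N x₀ s c) :
    IsBlock m N x₀ (r + s) (b - c) where
  norm_le t := norm_sub_le_of_le (hb.norm_le t) (hc.norm_le t)
  eq_zero_of_notMem t ht := by
    rw [Pi.sub_apply, hb.eq_zero_of_notMem t ht, hc.eq_zero_of_notMem t ht, sub_zero]

lemma isBlock_indicator {g : G m → ℂ} (hr : 0 ≤ r) (hg : ∀ t ∈ cyl m N x₀, ‖g t‖ ≤ r) :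
    IsBlock m N x₀ r ((cyl m N x₀).indicator g) where
  norm_le t := by
    by_cases ht : t ∈ cyl m N x₀
    · rw [Set.indicator_of_mem ht]
      exact hg t ht
    · rwa [Set.indicator_of_notMem ht, norm_zero]
  eq_zero_of_notMem _ ht := Set.indicator_of_notMem ht g

variable [NeZero (m j)]

lemma sum_apply_of_eq_zero_of_notMem {h : ZMod (m j) → G m → ℂ}
    (hh : ∀ a, ∀ t ∉ cyl m (j + 1) (Function.update x₀ j a), h a t = 0) (t : G m) :
    (∑ a, h a) t = h (t j) t := by
  rw [Finset.sum_apply]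
  exact sum_eq_single _ (fun a _ ha => hh a t fun hta => ha (mem_cyl_succ_update.1 hta).2.symm)
    fun h => absurd (mem_univ _) h

lemma IsBlock.sum {h : ZMod (m j) → G m → ℂ}
    (hh : ∀ a, IsBlock m (j + 1) (Function.update x₀ j a) r (h a)) :
    IsBlock m j x₀ r (∑ a, h a) where
  norm_le t := by
    rw [sum_apply_of_eq_zero_of_notMem fun a => (hh a).eq_zero_of_notMem]
    exact (hh _).norm_le t
  eq_zero_of_notMem t ht := by
    rw [sum_apply_of_eq_zero_of_notMem fun a => (hh a).eq_zero_of_notMem]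
    exact (hh _).eq_zero_of_notMem t fun hta => ht (mem_cyl_succ_update.1 hta).1

lemma indicator_cyl_eq_sum (g : G m → ℂ) :
    (cyl m j x₀).indicator g =
      ∑ a, (cyl m (j + 1) (Function.update x₀ j a)).indicator g := by
  funext t
  rw [sum_apply_of_eq_zero_of_notMem fun a t ht => Set.indicator_of_notMem ht g]
  exact Set.indicator_eq_indicator (by rw [mem_cyl_succ_update, and_iff_left rfl]) rfl

end Blocks

section Excess

variable {p r s : ℝ} {f : ℕ → G m → ℂ}

lemma excess_antitone (hp0 : 0 ≤ p) (hrs : r ≤ s) (x : G m) : excess m p f s x ≤ excess m p f r x :=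
  tsub_le_tsub_left (ENNReal.rpow_le_rpow (ENNReal.ofReal_le_ofReal hrs) hp0) _

lemma excess_le (hp0 : 0 ≤ p) (r : ℝ) (x : G m) :
    excess m p f r x ≤ 2 ^ p * maximalFunction m f x ^ p := by
  rw [← ENNReal.mul_rpow_of_nonneg _ _ hp0]
  exact tsub_le_self

lemma ofReal_mul_rpow {c : ℝ} (hp0 : 0 ≤ p) (hc : 0 ≤ c) (r : ℝ) :
    ENNReal.ofReal (c * r) ^ p = ENNReal.ofReal c ^ p * ENNReal.ofReal r ^ p := by
  rw [ENNReal.ofReal_mul hc, ENNReal.mul_rpow_of_nonneg _ _ hp0]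

lemma excess_two_mul_add_le (hp0 : 0 ≤ p) {n : ℕ} {x : G m} (hx : r ≤ ‖f n x‖) :
    excess m p f (2 * r) x + (2 ^ p - 1) * ENNReal.ofReal r ^ p ≤ excess m p f r x := by
  have le_maximal : ENNReal.ofReal r ≤ maximalFunction m f x := by
    refine (ENNReal.ofReal_le_ofReal hx).trans ?_
    rw [ofReal_norm]
    exact le_iSup (fun n => (‖f n x‖₊ : ℝ≥0∞)) n
  have hrp : ENNReal.ofReal r ^ p ≠ ⊤ :=
    ENNReal.rpow_ne_top_of_nonneg hp0 ENNReal.ofReal_ne_top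
  unfold excess
  rw [ENNReal.sub_mul fun _ _ => hrp, one_mul, ofReal_mul_rpow hp0 zero_le_two,
    ENNReal.ofReal_ofNat, tsub_add_tsub_cancel]
  · rw [← ENNReal.mul_rpow_of_nonneg _ _ hp0]
    gcongr
  · exact le_mul_of_one_le_left'
      ((ENNReal.one_rpow p).ge.trans (ENNReal.rpow_le_rpow one_le_two hp0))

variable {μ : Measure (G m)}

lemma setLIntegral_excess_two_mul_add_le (hp0 : 0 ≤ p) (hr : 0 ≤ r) {I J : Set (G m)}
    (hJ : MeasurableSet J) (hJI : J ⊆ I) {n : ℕ} (hrf : ∀ t ∈ J, r ≤ ‖f n t‖) :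
    ∫⁻ t in I, excess m p f (2 * r) t ∂μ + (2 ^ p - 1) * ENNReal.ofReal r ^ p * μ J ≤
      ∫⁻ t in I, excess m p f r t ∂μ := by
  have integral_J : ∫⁻ t in I, J.indicator (fun _ => (2 ^ p - 1) * ENNReal.ofReal r ^ p) t ∂μ =
      (2 ^ p - 1) * ENNReal.ofReal r ^ p * μ J := by
    rw [lintegral_indicator_const hJ, Measure.restrict_apply hJ,
      Set.inter_eq_self_of_subset_left hJI]
  rw [← integral_J, ← lintegral_add_right _ (measurable_const.indicator hJ)]
  refine lintegral_mono fun t => ?_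
  by_cases ht : t ∈ J
  · simpa only [Set.indicator_of_mem ht] using excess_two_mul_add_le hp0 (hrf t ht)
  · simpa only [Set.indicator_of_notMem ht, add_zero] using
      excess_antitone hp0 (by linarith : r ≤ 2 * r) t

end Excess

end AtomicDecomposition

section Truncation

/-- The constant that lets the excess between heights `r` and `2r` pay for the atom of height `3r`
that arises when the truncation height is doubled. -/
def doublingConst (p : ℝ) (B : ℕ) : ℝ≥0∞ := 3 ^ p * B / (2 ^ p - 1)

lemma two_rpow_sub_one_ne_zero {p : ℝ} (hp0 : 0 < p) : (2 : ℝ≥0∞) ^ p - 1 ≠ 0 :=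
  (tsub_pos_of_lt (ENNReal.one_lt_rpow ENNReal.one_lt_two hp0)).ne'

lemma doublingConst_mul {p : ℝ} (hp0 : 0 < p) (B : ℕ) :
    doublingConst p B * (2 ^ p - 1) = 3 ^ p * B :=
  ENNReal.div_mul_cancel (two_rpow_sub_one_ne_zero hp0)
    (ENNReal.sub_ne_top (ENNReal.rpow_ne_top_of_nonneg hp0.le ENNReal.ofNat_ne_top))

lemma doublingConst_ne_top {p : ℝ} (hp0 : 0 < p) (B : ℕ) : doublingConst p B ≠ ⊤ :=
  ENNReal.div_ne_top (ENNReal.mul_ne_top (ENNReal.rpow_ne_top_of_nonneg hp0.le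
    ENNReal.ofNat_ne_top) (ENNReal.natCast_ne_top B)) (two_rpow_sub_one_ne_zero hp0)

variable {m : ℕ → ℕ} {μ : Measure (G m)} {p : ℝ} {A C : ℝ≥0∞} {T : (G m → ℂ) → ℝ≥0∞}
  {f : ℕ → G m → ℂ} {N j : ℕ} {x₀ : G m} {r : ℝ} {B : ℕ}

lemma IsBoundedOnAtoms.map_sum_le (hT : IsBoundedOnAtoms m μ p A T) {ι : Type*} (s : Finset ι)
    {g : ι → G m → ℂ} (hg : ∀ i, Integrable (g i) μ) : T (∑ i ∈ s, g i) ≤ ∑ i ∈ s, T (g i) :=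
  le_sum_of_subadditive_on_pred T (Integrable · μ) hT.map_zero.le (fun _ _ => hT.map_add_le)
    (fun _ _ => Integrable.add) g fun i _ => hg i

lemma measure_cyl_le_mul (hm : ∀ n, 2 ≤ m n) (hB : ∀ n, m n ≤ B)
    (hμ : ∀ n x, μ (cyl m n x) = (MM m n : ℝ≥0∞)⁻¹) (j : ℕ) (x y : G m) :
    μ (cyl m j x) ≤ B * μ (cyl m (j + 1) y) := by
  have := neZero_of_two_le hm j
  have hmj : (m j : ℝ≥0∞) ≠ 0 := Nat.cast_ne_zero.2 (NeZero.ne _)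
  calc μ (cyl m j x) = m j * μ (cyl m (j + 1) y) := by
        rw [hμ, hμ, MM, Nat.cast_mul, ENNReal.mul_inv (.inl hmj) (.inl (ENNReal.natCast_ne_top _)),
          ENNReal.mul_inv_cancel_left hmj (ENNReal.natCast_ne_top _)]
    _ ≤ B * μ (cyl m (j + 1) y) := by gcongr; exact hB j

lemma isTruncation_self (hT : IsBoundedOnAtoms m μ p A T) (hf : IsMartingale m μ f)
    (hfr : ‖f N x₀‖ ≤ r) :
    IsTruncation m μ p C T f N N x₀ r ((cyl m N x₀).indicator (f N)) where
  isBlock := isBlock_indicator ((norm_nonneg _).trans hfr) fun t ht => by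
    rwa [eq_of_measurable_filt (hf.2.1 N) ht]
  integrable := (hf.1 N).indicator (measurableSet_cyl N x₀)
  integral_eq := integral_indicator (measurableSet_cyl N x₀)
  map_sub_le := by
    rw [sub_self, hT.map_zero]
    exact zero_le

lemma IsTruncation.sum (hT : IsBoundedOnAtoms m μ p A T) (hf : IsMartingale m μ f)
    [NeZero (m j)] {h : ZMod (m j) → G m → ℂ}
    (hh : ∀ a, IsTruncation m μ p C T f N (j + 1) (Function.update x₀ j a) r (h a)) :
    IsTruncation m μ p C T f N j x₀ r (∑ a, h a) where
  isBlock := .sum fun a => (hh a).isBlock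
  integrable := integrable_finsetSum' _ fun a _ => (hh a).integrable
  integral_eq := by
    simp only [Finset.sum_apply]
    rw [integral_finsetSum _ fun a _ => (hh a).integrable, setIntegral_cyl_eq_sum j x₀ (hf.1 N)]
    exact sum_congr rfl fun a _ => (hh a).integral_eq
  map_sub_le := by
    rw [indicator_cyl_eq_sum, ← sum_sub_distrib, setLIntegral_cyl_eq_sum, mul_sum]
    exact (hT.map_sum_le _ fun a =>
      ((hf.1 N).indicator (measurableSet_cyl _ _)).sub (hh a).integrable).trans
        (sum_le_sum fun a _ => (hh a).map_sub_le)

lemma integral_indicator_cyl_const (hf : IsMartingale m μ f) (hjN : j ≤ N) :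
    ∫ t, (cyl m j x₀).indicator (fun _ => f j x₀) t ∂μ = ∫ t in cyl m j x₀, f N t ∂μ := by
  rw [integral_indicator (measurableSet_cyl j x₀), setIntegral_cyl_martingale hf hjN]
  exact setIntegral_congr_fun (measurableSet_cyl j x₀) fun t ht =>
    (eq_of_measurable_filt (hf.2.1 j) ht).symm

section Doubling

variable [IsFiniteMeasure μ]

-- The two truncations differ by an atom of height `3r`.
lemma IsTruncation.map_sub_const_le (hT : IsBoundedOnAtoms m μ p A T)
    (hf : IsMartingale m μ f) (hjN : j ≤ N) (hfr : ‖f j x₀‖ ≤ r) {h : G m → ℂ}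
    (hh : IsTruncation m μ p C T f N j x₀ (2 * r) h) :
    T ((cyl m j x₀).indicator (f N) - (cyl m j x₀).indicator fun _ => f j x₀) ≤
      C * ∫⁻ t in cyl m j x₀, excess m p f (2 * r) t ∂μ +
        A * ENNReal.ofReal (3 * r) ^ p * μ (cyl m j x₀) := by
  have const_isBlock : IsBlock m j x₀ r ((cyl m j x₀).indicator fun _ => f j x₀) :=
    isBlock_indicator ((norm_nonneg _).trans hfr) fun _ _ => hfr
  have const_integrable : Integrable ((cyl m j x₀).indicator fun _ => f j x₀) μ :=
    (integrable_const _).indicator (measurableSet_cyl j x₀)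
  have mean_zero : ∫ t, (h - (cyl m j x₀).indicator fun _ => f j x₀) t ∂μ = 0 := by
    simp only [Pi.sub_apply]
    rw [integral_sub hh.integrable const_integrable, hh.integral_eq,
      integral_indicator_cyl_const hf hjN, sub_self]
  rw [← sub_add_sub_cancel _ h]
  refine (hT.map_add_le (((hf.1 N).indicator (measurableSet_cyl j x₀)).sub hh.integrable)
    (hh.integrable.sub const_integrable)).trans (add_le_add hh.map_sub_le ?_)
  rw [show 3 * r = 2 * r + r by ring]
  exact hT.le_of_isBlock (hh.isBlock.sub const_isBlock) (.inl mean_zero)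

lemma IsTruncation.of_two_mul (hp0 : 0 < p) (hm : ∀ n, 2 ≤ m n) (hB : ∀ n, m n ≤ B)
    (hμ : ∀ n x, μ (cyl m n x) = (MM m n : ℝ≥0∞)⁻¹) (hT : IsBoundedOnAtoms m μ p A T)
    (hf : IsMartingale m μ f) (hjN : j ≤ N) (hfr : ‖f j x₀‖ ≤ r) {a : ZMod (m j)}
    (ha : r ≤ ‖f (j + 1) (Function.update x₀ j a)‖) {h : G m → ℂ}
    (hh : IsTruncation m μ p (A * doublingConst p B) T f N j x₀ (2 * r) h) :
    IsTruncation m μ p (A * doublingConst p B) T f N j x₀ r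
      ((cyl m j x₀).indicator fun _ => f j x₀) where
  isBlock := isBlock_indicator ((norm_nonneg _).trans hfr) fun _ _ => hfr
  integrable := (integrable_const _).indicator (measurableSet_cyl j x₀)
  integral_eq := integral_indicator_cyl_const hf hjN
  map_sub_le := by
    have excess_gain := setLIntegral_excess_two_mul_add_le (μ := μ) (f := f) hp0.le
      ((norm_nonneg _).trans hfr) (measurableSet_cyl (j + 1) (Function.update x₀ j a))
      (fun t ht => (mem_cyl_succ_update.1 ht).1)
      (fun t ht => ha.trans_eq (by rw [eq_of_measurable_filt (hf.2.1 (j + 1)) ht]))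
    refine (hh.map_sub_const_le hT hf hjN hfr).trans ?_
    rw [ofReal_mul_rpow hp0.le zero_le_three, ENNReal.ofReal_ofNat]
    set I := cyl m j x₀
    set J := cyl m (j + 1) (Function.update x₀ j a)
    calc A * doublingConst p B * ∫⁻ t in I, excess m p f (2 * r) t ∂μ +
          A * (3 ^ p * ENNReal.ofReal r ^ p) * μ I
        ≤ A * doublingConst p B * ∫⁻ t in I, excess m p f (2 * r) t ∂μ +
          A * (3 ^ p * ENNReal.ofReal r ^ p) * (B * μ J) := by
          gcongr
          exact measure_cyl_le_mul hm hB hμ j _ _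
      _ = A * doublingConst p B * ∫⁻ t in I, excess m p f (2 * r) t ∂μ +
          A * (3 ^ p * B) * ENNReal.ofReal r ^ p * μ J := by ring
      _ = A * doublingConst p B * (∫⁻ t in I, excess m p f (2 * r) t ∂μ +
          (2 ^ p - 1) * ENNReal.ofReal r ^ p * μ J) := by rw [← doublingConst_mul hp0 B]; ring
      _ ≤ A * doublingConst p B * ∫⁻ t in I, excess m p f r t ∂μ := by gcongr

end Doubling

variable [IsProbabilityMeasure μ]

-- If some child exceeds height `r`, double the height; otherwise truncate each child at height `r`.
lemma exists_isTruncation_of_children (hp0 : 0 < p) (hm : ∀ n, 2 ≤ m n) (hB : ∀ n, m n ≤ B)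
    (hμ : ∀ n x, μ (cyl m n x) = (MM m n : ℝ≥0∞)⁻¹) (hT : IsBoundedOnAtoms m μ p A T)
    (hf : IsMartingale m μ f) (hjN : j ≤ N)
    (children : ∀ (a : ZMod (m j)) (r : ℝ), 0 < r → ‖f (j + 1) (Function.update x₀ j a)‖ ≤ r →
      ∃ h, IsTruncation m μ p (A * doublingConst p B) T f N (j + 1) (Function.update x₀ j a) r h)
    (hr : 0 < r) (hfr : ‖f j x₀‖ ≤ r) :
    ∃ h, IsTruncation m μ p (A * doublingConst p B) T f N j x₀ r h := by
  have := neZero_of_two_le hm j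
  obtain ⟨R, hR⟩ : ∃ R, ∀ a, ‖f (j + 1) (Function.update x₀ j a)‖ ≤ R :=
    (Set.finite_range fun a => ‖f (j + 1) (Function.update x₀ j a)‖).bddAbove.imp
      fun _ hR a => hR ⟨a, rfl⟩
  obtain ⟨K, hK⟩ := pow_unbounded_of_one_lt (R / r) one_lt_two
  have children_le (a : ZMod (m j)) : ‖f (j + 1) (Function.update x₀ j a)‖ ≤ 2 ^ K * r :=
    (hR a).trans ((div_lt_iff₀ hr).1 hK).le
  clear hK
  induction K generalizing r with
  | zero =>
    choose h hh using fun a => children a r hr (by simpa using children_le a)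
    exact ⟨_, .sum hT hf hh⟩
  | succ K ih =>
    by_cases below : ∀ a, ‖f (j + 1) (Function.update x₀ j a)‖ ≤ r
    · choose h hh using fun a => children a r hr (below a)
      exact ⟨_, .sum hT hf hh⟩
    · push Not at below
      obtain ⟨a, ha⟩ := below
      obtain ⟨h, hh⟩ := ih (r := 2 * r) (by positivity) (by linarith) fun a => by
        rw [← mul_assoc, ← pow_succ]
        exact children_le a
      exact ⟨_, hh.of_two_mul hp0 hm hB hμ hT hf hjN hfr ha.le⟩

lemma exists_isTruncation (hp0 : 0 < p) (hm : ∀ n, 2 ≤ m n) (hB : ∀ n, m n ≤ B)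
    (hμ : ∀ n x, μ (cyl m n x) = (MM m n : ℝ≥0∞)⁻¹) (hT : IsBoundedOnAtoms m μ p A T)
    (hf : IsMartingale m μ f) (hjN : j ≤ N) (x₀ : G m) (hr : 0 < r) (hfr : ‖f j x₀‖ ≤ r) :
    ∃ h, IsTruncation m μ p (A * doublingConst p B) T f N j x₀ r h := by
  induction hjN using Nat.decreasingInduction generalizing x₀ r with
  | self => exact ⟨_, isTruncation_self hT hf hfr⟩
  | of_succ j hjN ih =>
    exact exists_isTruncation_of_children hp0 hm hB hμ hT hf hjN.le
      (fun a _ hr hfr => ih _ hr hfr) hr hfr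

lemma IsBoundedOnAtoms.apply_le_add (hp0 : 0 < p) (hm : ∀ n, 2 ≤ m n) (hB : ∀ n, m n ≤ B)
    (hμ : ∀ n x, μ (cyl m n x) = (MM m n : ℝ≥0∞)⁻¹) (hT : IsBoundedOnAtoms m μ p A T)
    (hf : IsMartingale m μ f) (N : ℕ) (hr : 0 < r) (hfr : ‖f 0 0‖ ≤ r) :
    T (f N) ≤ A * doublingConst p B * (2 ^ p * ∫⁻ x, maximalFunction m f x ^ p ∂μ) +
      A * ENNReal.ofReal r ^ p := by
  obtain ⟨h, hh⟩ := exists_isTruncation hp0 hm hB hμ hT hf N.zero_le 0 hr hfr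
  have error_le := hh.map_sub_le
  have head_le := hT.le_of_isBlock hh.isBlock (.inr rfl)
  rw [cyl_zero, Set.indicator_univ, setLIntegral_univ] at error_le
  rw [cyl_zero, measure_univ, mul_one] at head_le
  have excess_le : ∫⁻ x, excess m p f r x ∂μ ≤ 2 ^ p * ∫⁻ x, maximalFunction m f x ^ p ∂μ := by
    rw [← lintegral_const_mul' _ _ (ENNReal.rpow_ne_top_of_nonneg hp0.le ENNReal.ofNat_ne_top)]
    exact lintegral_mono (excess_le hp0.le r)
  calc T (f N) = T (f N - h + h) := by rw [sub_add_cancel]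
    _ ≤ T (f N - h) + T h := hT.map_add_le ((hf.1 N).sub hh.integrable) hh.integrable
    _ ≤ _ := add_le_add (error_le.trans (by gcongr)) head_le

lemma ofReal_norm_rpow_le_lintegral_maximalFunction (hp0 : 0 ≤ p) (hf : IsMartingale m μ f) :
    ENNReal.ofReal ‖f 0 0‖ ^ p ≤ ∫⁻ x, maximalFunction m f x ^ p ∂μ := by
  calc ENNReal.ofReal ‖f 0 0‖ ^ p = ∫⁻ _, ENNReal.ofReal ‖f 0 0‖ ^ p ∂μ := by
        rw [lintegral_const, measure_univ, mul_one]
    _ ≤ ∫⁻ x, maximalFunction m f x ^ p ∂μ := by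
        refine lintegral_mono fun x => ENNReal.rpow_le_rpow ?_ hp0
        rw [ofReal_norm, eq_of_measurable_filt (hf.2.1 0) (y := x) (by rw [cyl_zero]; trivial)]
        exact le_iSup (fun n => (‖f n x‖₊ : ℝ≥0∞)) 0

theorem IsBoundedOnAtoms.apply_martingale_le (hp0 : 0 < p) (hm : ∀ n, 2 ≤ m n)
    (hB : ∀ n, m n ≤ B) (hμ : ∀ n x, μ (cyl m n x) = (MM m n : ℝ≥0∞)⁻¹) (hA : A ≠ ⊤)
    (hT : IsBoundedOnAtoms m μ p A T) (hf : IsMartingale m μ f) (N : ℕ) :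
    T (f N) ≤
      A * (doublingConst p B * 2 ^ p + 1) * ∫⁻ x, maximalFunction m f x ^ p ∂μ := by
  set H := ∫⁻ x, maximalFunction m f x ^ p ∂μ
  have limit : Tendsto (fun r => A * doublingConst p B * (2 ^ p * H) + A * ENNReal.ofReal r ^ p)
      (nhdsWithin ‖f 0 0‖ (Set.Ioi ‖f 0 0‖))
      (nhds (A * doublingConst p B * (2 ^ p * H) + A * ENNReal.ofReal ‖f 0 0‖ ^ p)) :=
    (ENNReal.Tendsto.const_mul ((ENNReal.continuous_rpow_const.comp
      ENNReal.continuous_ofReal).continuousWithinAt) (.inr hA)).const_add _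
  calc T (f N) ≤ A * doublingConst p B * (2 ^ p * H) + A * ENNReal.ofReal ‖f 0 0‖ ^ p :=
        ge_of_tendsto limit <| eventually_mem_nhdsWithin.mono fun r hr =>
          hT.apply_le_add hp0 hm hB hμ hf N ((norm_nonneg _).trans_lt hr) (le_of_lt hr)
    _ ≤ A * doublingConst p B * (2 ^ p * H) + A * H := by
        gcongr
        exact ofReal_norm_rpow_le_lintegral_maximalFunction hp0.le hf
    _ = A * (doublingConst p B * 2 ^ p + 1) * H := by ring

end Truncation

/-! ### The strong summability estimate -/

section StrongSummability

variable {m : ℕ → ℕ} {α p : ℝ} {B : ℕ} {n R : ℕ} {μ : Measure (G m)} {f : ℕ → G m → ℂ}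

lemma atomConst_nonneg (hα0 : 0 < α) (hα1 : α < 1) (hp0 : 0 < p) (hp1 : p < 1) (B : ℕ) :
    0 ≤ atomConst α p B := by
  have := blockConst_nonneg hα0 hα1 B
  have := geomConst_pos hp0
  have := sub_pos.2 hp1
  unfold atomConst
  positivity

/-- The constant in the strong summability estimate for martingales. -/
def strongSumConst (α p : ℝ) (B : ℕ) : ℝ≥0∞ :=
  ENNReal.ofReal (atomConst α p B) * (doublingConst p B * 2 ^ p + 1)

lemma strongSumConst_ne_top (hp0 : 0 < p) (α : ℝ) (B : ℕ) : strongSumConst α p B ≠ ⊤ :=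
  ENNReal.mul_ne_top ENNReal.ofReal_ne_top <| ENNReal.add_ne_top.2
    ⟨ENNReal.mul_ne_top (doublingConst_ne_top hp0 B)
      (ENNReal.rpow_ne_top_of_nonneg hp0.le ENNReal.ofNat_ne_top), ENNReal.one_ne_top⟩

lemma sum_lintegral_mCes_eq_strongSum (hm : ∀ n, 2 ≤ m n) (hf : IsMartingale m μ f)
    (α p : ℝ) (n : ℕ) :
    ∑ k ∈ Icc 1 n, (∫⁻ x, (‖mCes m α μ f k x‖₊ : ℝ≥0∞) ^ p ∂μ) / (k : ℝ≥0∞) =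
      strongSum m α μ p n (f n) := by
  refine sum_congr rfl fun k hk => ?_
  have hk : k ≤ MM m n := (mem_Icc.1 hk).2.trans (lt_MM hm n).le
  simp only [mCes_eq_cesaroConv hm hf hk]

variable [IsProbabilityMeasure μ]

lemma isBoundedOnAtoms_strongSum (hα0 : 0 < α) (hα1 : α < 1) (hp0 : 0 < p) (hp1 : p < 1)
    (hαp : α * p = 1 - p) (hm : ∀ n, 2 ≤ m n) (hB : ∀ n, m n ≤ B)
    (hμ : ∀ n x, μ (cyl m n x) = (MM m n : ℝ≥0∞)⁻¹) (hR : 2 ≤ R) :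
    IsBoundedOnAtoms m μ p (ENNReal.ofReal (atomConst α p B * Real.log R))
      (strongSum m α μ p R) where
  map_zero := strongSum_zero hp0 R
  map_add_le := strongSum_add_le hp0.le hp1.le hm R
  le_of_isBlock {N x₀ r b} hb hb0 := by
    have hr := hb.nonneg
    have := atomConst_nonneg hα0 hα1 hp0 hp1 B
    have := Real.log_natCast_nonneg R
    refine (strongSum_le_of_isBlock hα0 hα1 hp0 hp1 hαp hm hB hμ hR hb hb0).trans_eq ?_
    rw [ENNReal.ofReal_mul (by positivity), ENNReal.ofReal_mul (by positivity),
      ENNReal.ofReal_rpow_of_nonneg hr hp0.le, hμ, ENNReal.ofReal_inv_of_pos (MM_cast_pos hm N),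
      ENNReal.ofReal_natCast]

theorem inv_log_mul_sum_lintegral_mCes_le (hα0 : 0 < α) (hα1 : α < 1) (hp0 : 0 < p)
    (hp1 : p < 1) (hαp : α * p = 1 - p) (hm : ∀ n, 2 ≤ m n) (hB : ∀ n, m n ≤ B)
    (hμ : ∀ n x, μ (cyl m n x) = (MM m n : ℝ≥0∞)⁻¹) (hf : IsMartingale m μ f) (hn : 2 ≤ n) :
    (ENNReal.ofReal (Real.log n))⁻¹ *
        ∑ k ∈ Icc 1 n, (∫⁻ x, (‖mCes m α μ f k x‖₊ : ℝ≥0∞) ^ p ∂μ) / (k : ℝ≥0∞) ≤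
      strongSumConst α p B * ∫⁻ x, maximalFunction m f x ^ p ∂μ := by
  have hlog : ENNReal.ofReal (Real.log n) ≠ 0 :=
    (ENNReal.ofReal_pos.2 (Real.log_pos (Nat.one_lt_cast.2 hn))).ne'
  rw [sum_lintegral_mCes_eq_strongSum hm hf,
    ENNReal.inv_mul_le_iff hlog ENNReal.ofReal_ne_top]
  calc strongSum m α μ p n (f n)
      ≤ ENNReal.ofReal (atomConst α p B * Real.log n) * (doublingConst p B * 2 ^ p + 1) *
          ∫⁻ x, maximalFunction m f x ^ p ∂μ :=
        (isBoundedOnAtoms_strongSum hα0 hα1 hp0 hp1 hαp hm hB hμ hn).apply_martingale_le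
          hp0 hm hB hμ ENNReal.ofReal_ne_top hf n
    _ = ENNReal.ofReal (Real.log n) *
          (strongSumConst α p B * ∫⁻ x, maximalFunction m f x ^ p ∂μ) := by
        rw [ENNReal.ofReal_mul (atomConst_nonneg hα0 hα1 hp0 hp1 B), strongSumConst]
        ring

end StrongSummability

/-- Let `0 < α < 1`. Then there is a constant `c_α` such that for every
martingale `f ∈ H_{1/(1+α)}(G_m)` and every `n ≥ 2`,
`(1/log n) ∑_{k=1}^{n} ‖σ_k^α f‖_{1/(1+α)}^{1/(1+α)} / k ≤ c_α ‖f‖_{H_{1/(1+α)}}^{1/(1+α)}`,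
where `σ_k^α` is the `k`-th `(C,α)` Cesàro mean of the Vilenkin-Fourier series. -/
theorem statement4
    (m : ℕ → ℕ) (hm : ∀ n, 2 ≤ m n) (hmb : ∃ B, ∀ n, m n ≤ B)
    (μ : Measure (G m)) [IsProbabilityMeasure μ]
    (hμ : ∀ (n : ℕ) (x : G m), μ (cyl m n x) = ((MM m n : ℝ≥0∞))⁻¹)
    (α : ℝ) (hα0 : 0 < α) (hα1 : α < 1) :
    ∃ c : ℝ≥0, ∀ f : ℕ → G m → ℂ, IsMartingale m μ f →
      HpNorm m μ (1 / (1 + α)) f < ⊤ → ∀ n : ℕ, 2 ≤ n →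
      (ENNReal.ofReal (Real.log n))⁻¹ *
          ∑ k ∈ Finset.Icc 1 n,
            (∫⁻ x, (‖mCes m α μ f k x‖₊ : ℝ≥0∞) ^ (1 / (1 + α)) ∂μ) / (k : ℝ≥0∞) ≤
        (c : ℝ≥0∞) * ∫⁻ x, (⨆ j : ℕ, (‖f j x‖₊ : ℝ≥0∞)) ^ (1 / (1 + α)) ∂μ := by
  obtain ⟨B, hB⟩ := hmb
  have hp0 : 0 < 1 / (1 + α) := by positivity
  have hp1 : 1 / (1 + α) < 1 := (div_lt_one (by positivity)).2 (by linarith)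
  have hαp : α * (1 / (1 + α)) = 1 - 1 / (1 + α) := by
    field_simp
    ring
  refine ⟨(strongSumConst α (1 / (1 + α)) B).toNNReal, fun f hf _ n hn => ?_⟩
  rw [ENNReal.coe_toNNReal (strongSumConst_ne_top hp0 α B)]
  exact inv_log_mul_sum_lintegral_mCes_le hα0 hα1 hp0 hp1 hαp hm hB hμ hf hn

end Vilenkin
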